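/- Suppose ν satisfies the Carleman condition, Assumption (interior): G(x,y) ⪰ λ I_q on O₁ × O₂ for some λ > 0 and open bounded O₁ ⊂ X, O₂ ⊂ Y, and F(x) ∈ S[x]^p is positive semidefinite on X ∩ [−1,1]ⁿ. Then for every ε > 0 there exist ℓ₁, ℓ₂ ∈ ℕ such that for all d ≥ ℓ₁ and k ≥ ℓ₂, F(x) + ε(1 + Σ_{i=1}^n x_i^{2d}) I_p = Σ₀(x) + ∫_Y ⟨Σ(x,y), G(x,y)⟩_p dν(y) for some SOS matrices Σ₀ ∈ S[x]^p with deg Σ₀ ≤ 2d and Σ ∈ S[x,y]^{pq} with deg_x Σ ≤ 2d − 2d(G) and deg_y Σ ≤ 2k. -/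

import Mathlib

open MeasureTheory MvPolynomial Matrix Finset

noncomputable section

/-- A polynomial matrix is an SOS matrix if it factors as `Tᵀ * T`. -/
def IsSOSMatrix {σ : Type*} {ι : Type*} [Fintype ι]
    (M : Matrix ι ι (MvPolynomial σ ℝ)) : Prop :=
  ∃ (l : ℕ) (T : Matrix (Fin l) ι (MvPolynomial σ ℝ)), M = Tᵀ * T

/-- A polynomial is a sum of squares. -/
def IsSOSPoly {σ : Type*} (f : MvPolynomial σ ℝ) : Prop :=
  ∃ (l : ℕ) (g : Fin l → MvPolynomial σ ℝ), f = ∑ i, (g i) ^ 2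

/-- The block-trace bilinear map `⟨A,B⟩_p = Tr_p (Aᵀ (I_p ⊗ B))`. -/
def lram {R : Type*} [CommSemiring R] {ιp ιq : Type*} [Fintype ιq]
    (A : Matrix (ιp × ιq) (ιp × ιq) R) (B : Matrix ιq ιq R) :
    Matrix ιp ιp R :=
  Matrix.of fun i j => ∑ a : ιq, ∑ c : ιq, A (j, c) (i, a) * B c a

/-- The `x`-part of an exponent in the variables `x ⊕ y`. -/
def xPart {n m : ℕ} (d : (Fin n ⊕ Fin m) →₀ ℕ) : Fin n →₀ ℕ :=
  Finsupp.comapDomain Sum.inl d Sum.inl_injective.injOn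

/-- Integrate out the `y`-variables of a polynomial in `(x, y)` against the measure `ν`:
`∫_Y Σ_β H_β(x) y^β dν := Σ_β H_β(x) ∫_Y y^β dν`. -/
def integY {n m : ℕ} (ν : Measure (Fin m → ℝ))
    (q : MvPolynomial (Fin n ⊕ Fin m) ℝ) : MvPolynomial (Fin n) ℝ :=
  ∑ d ∈ q.support, MvPolynomial.monomial (xPart d)
    (q.coeff d * ∫ y, ∏ j : Fin m, (y j) ^ (d (Sum.inr j)) ∂ν)

/-- All polynomial moments of `ν` are finite. -/
def momentsFinite {m : ℕ} (ν : Measure (Fin m → ℝ)) : Prop :=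
  ∀ h : MvPolynomial (Fin m) ℝ, Integrable (fun y => |MvPolynomial.eval y h|) ν

/-- `ν` has support exactly `Y`. -/
def hasSupport {m : ℕ} (ν : Measure (Fin m → ℝ)) (Y : Set (Fin m → ℝ)) : Prop :=
  ν Yᶜ = 0 ∧ ∀ U : Set (Fin m → ℝ), IsOpen U → (U ∩ Y).Nonempty → 0 < ν U

/-- The multivariate Carleman condition on `ν`. -/
def Carleman {m : ℕ} (ν : Measure (Fin m → ℝ)) : Prop :=
  ∀ j : Fin m, ¬ Summable (fun d : ℕ =>
    (∫ y, (y j) ^ (2 * (d + 1)) ∂ν) ^ (-(1 : ℝ) / (2 * (d + 1))))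

/-- Evaluate a polynomial matrix at a point. -/
def evalMat {σ : Type*} {ι : Type*} (x : σ → ℝ)
    (M : Matrix ι ι (MvPolynomial σ ℝ)) : Matrix ι ι ℝ :=
  M.map (MvPolynomial.eval x)

/-- The spectral (L²-operator) norm of a real matrix. -/
def specNorm {ι : Type*} [Fintype ι] [DecidableEq ι] (A : Matrix ι ι ℝ) : ℝ :=
  ‖(Matrix.toEuclideanLin A).toContinuousLinearMap‖

/-- Degree of a polynomial matrix. -/
def matDeg {ι σ : Type*} [Fintype ι] (M : Matrix ι ι (MvPolynomial σ ℝ)) : ℕ :=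
  Finset.univ.sup fun i => Finset.univ.sup fun j => (M i j).totalDegree

/-- Degree in `x` of a polynomial in `(x,y)`. -/
def degX {n m : ℕ} (q : MvPolynomial (Fin n ⊕ Fin m) ℝ) : ℕ :=
  q.support.sup fun d => ∑ i : Fin n, d (Sum.inl i)

/-- Degree in `y` of a polynomial in `(x,y)`. -/
def degY {n m : ℕ} (q : MvPolynomial (Fin n ⊕ Fin m) ℝ) : ℕ :=
  q.support.sup fun d => ∑ j : Fin m, d (Sum.inr j)

def matDegX {ι : Type*} {n m : ℕ} [Fintype ι]
    (M : Matrix ι ι (MvPolynomial (Fin n ⊕ Fin m) ℝ)) : ℕ :=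
  Finset.univ.sup fun i => Finset.univ.sup fun j => degX (M i j)

def matDegY {ι : Type*} {n m : ℕ} [Fintype ι]
    (M : Matrix ι ι (MvPolynomial (Fin n ⊕ Fin m) ℝ)) : ℕ :=
  Finset.univ.sup fun i => Finset.univ.sup fun j => degY (M i j)

/-- Homogeneity in `x` of a polynomial in `(x,y)`. -/
def IsHomogeneousX {n m : ℕ} (q : MvPolynomial (Fin n ⊕ Fin m) ℝ) (k : ℕ) : Prop :=
  ∀ d ∈ q.support, ∑ i : Fin n, d (Sum.inl i) = k

/-- Positive semidefiniteness of the full (infinite) moment matrix `M(S)`: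
every finite principal block submatrix is PSD. -/
def MomentPSD {n p : ℕ} (S : (Fin n →₀ ℕ) → Matrix (Fin p) (Fin p) ℝ) : Prop :=
  ∀ (N : ℕ) (idx : Fin N → (Fin n →₀ ℕ)),
    (Matrix.of fun a b : Fin N × Fin p => S (idx a.1 + idx b.1) a.2 b.2).PosSemidef

/-- Exponents of degree at most `d` in `n` variables. -/
def Expo (n d : ℕ) := {a : Fin n → Fin (d + 1) // ∑ i, (a i : ℕ) ≤ d}

instance (n d : ℕ) : Fintype (Expo n d) := by unfold Expo; infer_instance
instance (n d : ℕ) : DecidableEq (Expo n d) := by unfold Expo; infer_instance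

def expF {n d : ℕ} (a : Fin n → Fin (d + 1)) : Fin n →₀ ℕ :=
  Finsupp.equivFunOnFinite.symm (fun i => (a i : ℕ))

/-- Truncated moment matrix `M_d(S)`. -/
def momentMat {n p : ℕ} (S : (Fin n →₀ ℕ) → Matrix (Fin p) (Fin p) ℝ) (d : ℕ) :
    Matrix (Expo n d × Fin p) (Expo n d × Fin p) ℝ :=
  Matrix.of fun a b => S (expF a.1.1 + expF b.1.1) a.2 b.2

/-- Truncated localizing matrix `M^ν_{d,k}(G S)`. -/
def locMat {n m p q : ℕ} (ν : Measure (Fin m → ℝ))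
    (G : Matrix (Fin q) (Fin q) (MvPolynomial (Fin n ⊕ Fin m) ℝ))
    (S : (Fin n →₀ ℕ) → Matrix (Fin p) (Fin p) ℝ) (d k : ℕ) :
    Matrix ((Expo n d × Expo m k) × (Fin p × Fin q))
           ((Expo n d × Expo m k) × (Fin p × Fin q)) ℝ :=
  Matrix.of fun r c =>
    ∑ e ∈ (G r.2.2 c.2.2).support,
      (∫ y, ∏ j : Fin m, (y j) ^ (e (Sum.inr j) + (r.1.2.1 j : ℕ) + (c.1.2.1 j : ℕ)) ∂ν) *
      ((G r.2.2 c.2.2).coeff e *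
        S (expF r.1.1.1 + expF c.1.1.1 + xPart e) r.2.1 c.2.1)

/-- The Riesz functional `L_S(H) = Σ_α tr(H_α S_α)`. -/
def RieszL {n p : ℕ} (S : (Fin n →₀ ℕ) → Matrix (Fin p) (Fin p) ℝ)
    (H : Matrix (Fin p) (Fin p) (MvPolynomial (Fin n) ℝ)) : ℝ :=
  ∑ i, ∑ j, ∑ α ∈ (H i j).support, (H i j).coeff α * S α j i

end

/-- Taylor estimate for the imaginary exponential. -/
theorem norm_exp_I_mul_sub_sum_le (K : ℕ) (θ : ℝ) :
    ‖Complex.exp (Complex.I * θ) - ∑ j ∈ range K, (Complex.I * θ) ^ j / (j.factorial : ℂ)‖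
      ≤ |θ| ^ K / K.factorial := by
  have hpos : ∀ K : ℕ, ∀ θ : ℝ, 0 ≤ θ →
      ‖Complex.exp (Complex.I * θ) - ∑ j ∈ range K, (Complex.I * θ) ^ j / (j.factorial : ℂ)‖
        ≤ θ ^ K / K.factorial := by
    intro K
    induction K with
    | zero => intro θ _; simp [Complex.norm_exp_I_mul_ofReal]
    | succ K ih =>
      intro θ hθ
      have hd : ∀ x : ℝ, HasDerivAt (fun x : ℝ => Complex.exp (Complex.I * x) -
          ∑ j ∈ range (K + 1), (Complex.I * x) ^ j / (j.factorial : ℂ))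
          (Complex.I * (Complex.exp (Complex.I * x) -
            ∑ j ∈ range K, (Complex.I * x) ^ j / (j.factorial : ℂ))) x := by
        intro x
        have h1 : HasDerivAt (fun x : ℝ => Complex.I * (x : ℂ)) Complex.I x := by
          simpa using (Complex.ofRealCLM.hasDerivAt (x := x)).const_mul Complex.I
        have h2 := h1.cexp
        have h3 : HasDerivAt (fun x : ℝ =>
            ∑ j ∈ range (K + 1), (Complex.I * x) ^ j / (j.factorial : ℂ))
            (∑ j ∈ range (K + 1), ((j : ℂ) * (Complex.I * x) ^ (j - 1) * Complex.I)
              / (j.factorial : ℂ)) x := by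
          apply HasDerivAt.fun_sum
          intro j _
          exact (h1.pow j).div_const _
        have h4 := h2.sub h3
        refine h4.congr_deriv (Eq.symm ?_)
        rw [sum_range_succ', mul_sub, mul_sum]
        simp only [Nat.cast_zero, zero_mul, zero_div, add_zero]
        congr 1
        · ring
        · refine sum_congr rfl fun j _ => ?_
          have : ((j.factorial : ℕ) : ℂ) ≠ 0 := by exact_mod_cast j.factorial_ne_zero
          have h' : ((j : ℂ) + 1) ≠ 0 := by exact_mod_cast j.succ_ne_zero
          rw [Nat.factorial_succ]
          push_cast
          field_simp
      have hB : ∀ x : ℝ, HasDerivAt (fun x : ℝ => x ^ (K + 1) / ((K + 1).factorial : ℝ))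
          (x ^ K / (K.factorial : ℝ)) x := by
        intro x
        refine ((hasDerivAt_pow (K + 1) x).div_const ((K + 1).factorial : ℝ)).congr_deriv
          (Eq.symm ?_)
        have : ((K.factorial : ℕ) : ℝ) ≠ 0 := by exact_mod_cast K.factorial_ne_zero
        rw [Nat.factorial_succ]
        push_cast
        field_simp
      have := image_norm_le_of_norm_deriv_right_le_deriv_boundary (a := 0) (b := θ)
        (f := fun x : ℝ => Complex.exp (Complex.I * x) -
          ∑ j ∈ range (K + 1), (Complex.I * x) ^ j / (j.factorial : ℂ))
        (B := fun x : ℝ => x ^ (K + 1) / ((K + 1).factorial : ℝ))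
        (fun x _ => (hd x).continuousAt.continuousWithinAt)
        (fun x _ => (hd x).hasDerivWithinAt)
        (by simp [sum_range_succ']) hB
        (fun x hx => by
          rw [norm_mul, Complex.norm_I, one_mul]
          exact ih x hx.1)
      exact this ⟨hθ, le_rfl⟩
  rcases le_total 0 θ with h | h
  · rw [abs_of_nonneg h]; exact hpos K θ h
  · rw [abs_of_nonpos h]
    refine le_trans (le_of_eq ?_) (hpos K (-θ) (by linarith))
    rw [← Complex.norm_conj]
    congr 1
    simp [← Complex.exp_conj, map_sub, map_sum]

/-- A quasi-analyticity criterion in the spirit of Denjoy-Carleman (Bang's argument): a family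
`c n` behaving like the successive derivatives of `c 0`, with Taylor remainders bounded by `M n`,
where `M (n + 1) ≤ ρ n * M n`, `ρ` monotone and `∑ 1 / ρ n = ∞`, vanishes if it vanishes at `0`. -/
theorem quasianalytic_eq_zero (c : ℕ → ℝ → ℂ) (M ρ : ℕ → ℝ) (hM : ∀ n, 0 ≤ M n)
    (hρ : ∀ n, 0 < ρ n) (hmono : Monotone ρ) (hMρ : ∀ n, M (n + 1) ≤ ρ n * M n)
    (htaylor : ∀ n K s h, ‖c n (s + h) - ∑ j ∈ range K,
      (Complex.I * (h : ℝ)) ^ j / (j.factorial : ℂ) * c (n + j) s‖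
        ≤ |h| ^ K / K.factorial * M (n + K))
    (h0 : ∀ n, c n 0 = 0) (hdiv : ¬ Summable fun n => (ρ n)⁻¹) (s : ℝ) : c 0 s = 0 := by
  have hMj : ∀ N j n, n + j ≤ N + 1 → M (n + j) ≤ M n * ρ N ^ j := by
    intro N j
    induction j with
    | zero => intro n _; simp
    | succ j ih =>
      intro n hn
      calc M (n + (j + 1)) ≤ ρ (n + j) * M (n + j) := hMρ (n + j)
        _ ≤ ρ N * (M n * ρ N ^ j) := by
            apply mul_le_mul (hmono (by omega)) (ih n (by omega)) (hM _) (hρ _).le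
        _ = M n * ρ N ^ (j + 1) := by ring
  have step : ∀ N s h, (∀ n ≤ N + 1, ‖c n s‖ ≤ Real.exp (n - (N + 1 : ℕ)) * M n) →
      |h| ≤ (Real.exp 1)⁻¹ * (ρ N)⁻¹ → ∀ n ≤ N, ‖c n (s + h)‖ ≤ Real.exp (n - N) * M n := by
    intro N s h hP hh n hn
    obtain ⟨K, hK⟩ : ∃ K, n + K = N + 1 := ⟨N + 1 - n, by omega⟩
    have h1 : ‖c n (s + h)‖ ≤ ∑ j ∈ range (K + 1),
        |h| ^ j / j.factorial * (Real.exp ((n + j : ℕ) - (N + 1 : ℕ)) * M (n + j)) := by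
      rw [sum_range_succ]
      have ht := htaylor n K s h
      have hlast : |h| ^ K / K.factorial * (Real.exp ((n + K : ℕ) - (N + 1 : ℕ)) * M (n + K))
          = |h| ^ K / K.factorial * M (n + K) := by rw [hK]; simp
      rw [hlast]
      have hsum : ‖∑ j ∈ range K, (Complex.I * (h : ℝ)) ^ j / (j.factorial : ℂ) * c (n + j) s‖
          ≤ ∑ j ∈ range K,
          |h| ^ j / j.factorial * (Real.exp ((n + j : ℕ) - (N + 1 : ℕ)) * M (n + j)) := by
        refine (norm_sum_le _ _).trans (sum_le_sum fun j hj => ?_)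
        rw [norm_mul]
        have : ‖(Complex.I * (h : ℝ)) ^ j / (j.factorial : ℂ)‖ = |h| ^ j / j.factorial := by
          simp
        rw [this]
        have hj' := mem_range.1 hj
        exact mul_le_mul_of_nonneg_left (hP (n + j) (by omega)) (by positivity)
      have := norm_le_norm_add_norm_sub' (c n (s + h))
        (∑ j ∈ range K, (Complex.I * (h : ℝ)) ^ j / (j.factorial : ℂ) * c (n + j) s)
      linarith
    have h2 : ∑ j ∈ range (K + 1),
        |h| ^ j / j.factorial * (Real.exp ((n + j : ℕ) - (N + 1 : ℕ)) * M (n + j))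
        ≤ ∑ j ∈ range (K + 1), (Real.exp (n - (N + 1 : ℕ)) * M n) *
          ((Real.exp 1 * |h| * ρ N) ^ j / j.factorial) := by
      refine sum_le_sum fun j hj => ?_
      have hj' := mem_range.1 hj
      have e1 : Real.exp ((n + j : ℕ) - (N + 1 : ℕ))
          = Real.exp (n - (N + 1 : ℕ)) * Real.exp 1 ^ j := by
        rw [← Real.exp_nat_mul, ← Real.exp_add]; congr 1; push_cast; ring
      rw [e1]
      calc |h| ^ j / j.factorial * (Real.exp (n - (N + 1 : ℕ)) * Real.exp 1 ^ j * M (n + j))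
          ≤ |h| ^ j / j.factorial *
            (Real.exp (n - (N + 1 : ℕ)) * Real.exp 1 ^ j * (M n * ρ N ^ j)) := by
            gcongr
            exact hMj N j n (by omega)
        _ = _ := by ring
    have h3 : Real.exp 1 * |h| * ρ N ≤ 1 := by
      calc Real.exp 1 * |h| * ρ N ≤ Real.exp 1 * ((Real.exp 1)⁻¹ * (ρ N)⁻¹) * ρ N := by
            gcongr
            exact (hρ N).le
        _ = 1 := by field_simp [(hρ N).ne']
    have hx0 : 0 ≤ Real.exp 1 * |h| * ρ N := by have := hρ N; positivity
    have h4 := Real.sum_le_exp_of_nonneg hx0 (K + 1)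
    have h5 : Real.exp (Real.exp 1 * |h| * ρ N) ≤ Real.exp 1 := Real.exp_le_exp.2 h3
    rw [← mul_sum] at h2
    have h6 : 0 ≤ Real.exp (n - (N + 1 : ℕ)) * M n := mul_nonneg (Real.exp_pos _).le (hM n)
    calc ‖c n (s + h)‖ ≤ _ := h1
      _ ≤ _ := h2
      _ ≤ Real.exp (n - (N + 1 : ℕ)) * M n * Real.exp 1 :=
          mul_le_mul_of_nonneg_left (h4.trans h5) h6
      _ = Real.exp (n - N) * M n := by
          rw [mul_right_comm, ← Real.exp_add]; congr 2; push_cast; ring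
  have iter : ∀ r N s h, (∀ n ≤ N + r, ‖c n s‖ ≤ Real.exp (n - (N + r : ℕ)) * M n) →
      |h| ≤ (Real.exp 1)⁻¹ * ∑ i ∈ range r, (ρ (N + i))⁻¹ →
      ∀ n ≤ N, ‖c n (s + h)‖ ≤ Real.exp (n - N) * M n := by
    intro r
    induction r with
    | zero =>
      intro N s h hP hh n hn
      have : h = 0 := by simpa using hh
      simpa [this] using hP n (by omega)
    | succ r ih =>
      intro N s h hP hh
      rw [sum_range_succ, mul_add] at hh
      have ha : 0 ≤ (Real.exp 1)⁻¹ * ∑ i ∈ range r, (ρ (N + i))⁻¹ :=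
        mul_nonneg (by positivity) (sum_nonneg fun i _ => (inv_pos.2 (hρ _)).le)
      have hb' : 0 ≤ (Real.exp 1)⁻¹ * (ρ (N + r))⁻¹ :=
        mul_nonneg (by positivity) (inv_pos.2 (hρ _)).le
      obtain ⟨h1, h2, hsum, hh1, hh2⟩ : ∃ h1 h2 : ℝ, h1 + h2 = h ∧
          |h1| ≤ (Real.exp 1)⁻¹ * (ρ (N + r))⁻¹ ∧
          |h2| ≤ (Real.exp 1)⁻¹ * ∑ i ∈ range r, (ρ (N + i))⁻¹ := by
        set A := (Real.exp 1)⁻¹ * ∑ i ∈ range r, (ρ (N + i))⁻¹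
        set B := (Real.exp 1)⁻¹ * (ρ (N + r))⁻¹
        rw [abs_le] at hh
        refine ⟨max (-B) (min B h), h - max (-B) (min B h), by ring, ?_, ?_⟩
        · rw [abs_le]; constructor
          · exact le_max_left _ _
          · exact max_le (by linarith) (min_le_left _ _)
        · rw [abs_le]
          rcases max_cases (-B) (min B h) with ⟨h1, h2⟩ | ⟨h1, h2⟩ <;>
          rcases min_cases B h with ⟨h3, h4⟩ | ⟨h3, h4⟩ <;> constructor <;> linarith
      have := step (N + r) s h1 hP hh1
      rw [← hsum, ← add_assoc]
      exact ih N (s + h1) h2 this hh2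
  have key : ∀ N : ℕ, ‖c 0 s‖ ≤ Real.exp (-(N : ℝ)) * M 0 := by
    intro N
    have hdiv' : ¬ Summable fun i => (ρ (N + i))⁻¹ := by
      intro hs
      apply hdiv
      rw [← summable_nat_add_iff N]
      simpa [add_comm] using hs
    have htend := (not_summable_iff_tendsto_nat_atTop_of_nonneg
      (fun i => (inv_pos.2 (hρ (N + i))).le)).1 hdiv'
    obtain ⟨r, hr⟩ := (htend.eventually_ge_atTop (Real.exp 1 * |s|)).exists
    have := iter r N 0 s (fun n _ => by
        rw [h0]; simpa using mul_nonneg (Real.exp_pos _).le (hM n))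
      (by
        rw [← div_eq_inv_mul, le_div_iff₀ (Real.exp_pos 1)]
        linarith) 0 (Nat.zero_le _)
    simpa using this
  have hlim : Filter.Tendsto (fun N : ℕ => Real.exp (-(N : ℝ)) * M 0) Filter.atTop (nhds 0) := by
    have := (Real.tendsto_exp_neg_atTop_nhds_zero.comp tendsto_natCast_atTop_atTop).mul_const (M 0)
    simpa using this
  have := ge_of_tendsto' hlim key
  exact norm_le_zero_iff.1 this

/-- Weighted geometric means are controlled by weighted arithmetic means. -/
theorem prod_rpow_inv_le (a : ℕ → ℝ) (ha : ∀ i, 0 ≤ a i) (D : ℕ) (hD : 0 < D) :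
    (∏ i ∈ range D, a i) ^ ((D : ℝ)⁻¹) ≤
      Real.exp 1 * (((D : ℝ) ^ 2)⁻¹ * ∑ i ∈ range D, ((i : ℝ) + 1) * a i) := by
  have hD' : (0 : ℝ) < D := by exact_mod_cast hD
  have hprod : ∏ i ∈ range D, (((i : ℝ) + 1) * a i) = D.factorial * ∏ i ∈ range D, a i := by
    rw [prod_mul_distrib, ← prod_range_add_one_eq_factorial]
    push_cast
    rfl
  have hP : 0 ≤ ∏ i ∈ range D, a i := prod_nonneg fun i _ => ha i
  have hamgm := Real.geom_mean_le_arith_mean_weighted (range D) (fun _ => (D : ℝ)⁻¹)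
    (fun i => ((i : ℝ) + 1) * a i) (fun _ _ => by positivity)
    (by simp [hD'.ne']) (fun i _ => mul_nonneg (by positivity) (ha i))
  rw [Real.finsetProd_rpow _ _ (fun i _ => mul_nonneg (by positivity) (ha i)), hprod,
    Real.mul_rpow (by positivity) hP, ← mul_sum] at hamgm
  have hfac : (D : ℝ) ≤ Real.exp 1 * (D.factorial : ℝ) ^ ((D : ℝ)⁻¹) := by
    have h1 := Real.pow_div_factorial_le_exp (D : ℝ) hD'.le D
    have h2 : (D : ℝ) ^ D ≤ Real.exp D * D.factorial := by
      rwa [div_le_iff₀ (by positivity)] at h1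
    have h3 := Real.rpow_le_rpow (by positivity) h2 (inv_nonneg.2 hD'.le)
    rw [Real.mul_rpow (Real.exp_pos _).le (by positivity), ← Real.rpow_natCast,
      ← Real.rpow_mul hD'.le, mul_inv_cancel₀ hD'.ne', Real.rpow_one, ← Real.exp_mul,
      mul_inv_cancel₀ hD'.ne'] at h3
    exact h3
  have hx : 0 ≤ (∏ i ∈ range D, a i) ^ ((D : ℝ)⁻¹) := Real.rpow_nonneg hP _
  have h5 : (D : ℝ) * (∏ i ∈ range D, a i) ^ ((D : ℝ)⁻¹) ≤
      Real.exp 1 * ((D : ℝ)⁻¹ * ∑ i ∈ range D, ((i : ℝ) + 1) * a i) := by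
    calc _ ≤ Real.exp 1 * (D.factorial : ℝ) ^ ((D : ℝ)⁻¹) * (∏ i ∈ range D, a i) ^ ((D : ℝ)⁻¹) :=
          mul_le_mul_of_nonneg_right hfac hx
      _ = Real.exp 1 * ((D.factorial : ℝ) ^ ((D : ℝ)⁻¹) * (∏ i ∈ range D, a i) ^ ((D : ℝ)⁻¹)) := by
          ring
      _ ≤ _ := mul_le_mul_of_nonneg_left hamgm (Real.exp_pos 1).le
  rw [← mul_le_mul_iff_right₀ hD']
  refine h5.trans (le_of_eq ?_)
  field_simp

/-- A qualitative form of Carleman's inequality. -/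
theorem summable_geom_mean_of_summable (a : ℕ → ℝ) (ha : ∀ i, 0 ≤ a i) (hs : Summable a) :
    Summable fun d : ℕ => (∏ i ∈ range (d + 1), a i) ^ (((d + 1 : ℕ) : ℝ)⁻¹) := by
  refine summable_of_sum_range_le (c := Real.exp 1 * (2 * ∑' i, a i))
    (fun d => Real.rpow_nonneg (prod_nonneg fun i _ => ha i) _) fun N => ?_
  calc ∑ d ∈ range N, (∏ i ∈ range (d + 1), a i) ^ (((d + 1 : ℕ) : ℝ)⁻¹)
      ≤ ∑ d ∈ range N, Real.exp 1 * ((((d + 1 : ℕ) : ℝ) ^ 2)⁻¹ *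
          ∑ i ∈ range (d + 1), ((i : ℝ) + 1) * a i) :=
        sum_le_sum fun d _ => prod_rpow_inv_le a ha (d + 1) d.succ_pos
    _ = Real.exp 1 * ∑ i ∈ range N, ∑ d ∈ Ico i N, (((d + 1 : ℕ) : ℝ) ^ 2)⁻¹ *
          (((i : ℝ) + 1) * a i) := by
        rw [← mul_sum]
        congr 1
        simp_rw [mul_sum]
        refine sum_comm' fun d i => ?_
        simp only [mem_range, mem_Ico]
        omega
    _ ≤ Real.exp 1 * ∑ i ∈ range N, 2 * a i := by
        refine mul_le_mul_of_nonneg_left (sum_le_sum fun i _ => ?_) (Real.exp_pos 1).le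
        rw [← sum_mul]
        have h1 : ∑ d ∈ Ico i N, (((d + 1 : ℕ) : ℝ) ^ 2)⁻¹ ≤ 2 / ((i : ℝ) + 1) := by
          refine le_trans (le_of_eq ?_) (sum_Ioo_inv_sq_le (α := ℝ) i (N + 1))
          rw [sum_Ico_add' (fun d : ℕ => ((d : ℝ) ^ 2)⁻¹) i N 1]
          rfl
        calc _ ≤ 2 / ((i : ℝ) + 1) * (((i : ℝ) + 1) * a i) :=
              mul_le_mul_of_nonneg_right h1 (mul_nonneg (by positivity) (ha i))
          _ = 2 * a i := by field_simp
    _ ≤ Real.exp 1 * (2 * ∑' i, a i) := by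
        rw [← mul_sum]
        gcongr
        exact hs.sum_le_tsum _ fun i _ => ha i

/-- From the root form of Carleman's condition to the ratio form, along odd indices. -/
theorem carleman_ratio (e : ℕ → ℝ) (he : ∀ d, 0 < e d) (hlog : ∀ d, e (d + 1) ^ 2 ≤ e d * e (d + 2))
    (hdiv : ¬ Summable fun d : ℕ => e (d + 1) ^ (-(1 : ℝ) / (2 * (d + 1)))) :
    (Monotone fun d => √(e (d + 1) / e d)) ∧
      ¬ Summable fun d => (√(e (2 * d + 2) / e (2 * d + 1)))⁻¹ := by
  set σ : ℕ → ℝ := fun d => √(e (d + 1) / e d) with hσ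
  have hσpos : ∀ d, 0 < σ d := fun d => Real.sqrt_pos.2 (div_pos (he _) (he _))
  have hmono : Monotone σ := by
    refine monotone_nat_of_le_succ fun d => Real.sqrt_le_sqrt ?_
    rw [div_le_div_iff₀ (he _) (he _)]
    have := hlog d
    nlinarith
  refine ⟨hmono, fun hs => hdiv ?_⟩
  have hs1 : Summable fun d => (σ d)⁻¹ := by
    have hs' : Summable fun d => (σ (2 * d + 1))⁻¹ := hs
    have hanti : ∀ {a b}, a ≤ b → (σ b)⁻¹ ≤ (σ a)⁻¹ := fun h =>
      inv_anti₀ (hσpos _) (hmono h)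
    rw [← summable_nat_add_iff 1]
    have hodd : Summable fun k => (fun d => (σ (d + 1))⁻¹) (2 * k) := hs'
    have heven : Summable fun k => (fun d => (σ (d + 1))⁻¹) (2 * k + 1) :=
      Summable.of_nonneg_of_le (fun k => (inv_pos.2 (hσpos _)).le)
        (fun k => hanti (show 2 * k + 1 ≤ 2 * k + 1 + 1 by omega)) hs'
    exact hodd.even_add_odd heven
  have hs2 := summable_geom_mean_of_summable _ (fun i => (inv_pos.2 (hσpos i)).le) hs1
  have hprod : ∀ D, e D = e 0 * ∏ i ∈ range D, σ i ^ 2 := by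
    intro D
    induction D with
    | zero => simp
    | succ D ih =>
      rw [prod_range_succ, ← mul_assoc, ← ih, hσ, Real.sq_sqrt (div_pos (he _) (he _)).le]
      field_simp [(he D).ne']
  refine Summable.of_nonneg_of_le (fun d => Real.rpow_nonneg (he _).le _) (fun d => ?_)
    (hs2.mul_left (max 1 (e 0)⁻¹))
  have hP : 0 < ∏ i ∈ range (d + 1), σ i := prod_pos fun i _ => hσpos i
  have e1 : e (d + 1) ^ (-(1 : ℝ) / (2 * (d + 1))) =
      (e 0)⁻¹ ^ ((1 : ℝ) / (2 * (d + 1))) *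
        (∏ i ∈ range (d + 1), (σ i)⁻¹) ^ (((d + 1 : ℕ) : ℝ)⁻¹) := by
    rw [hprod (d + 1), prod_pow, prod_inv_distrib, Real.mul_rpow (he 0).le (by positivity),
      Real.inv_rpow (he 0).le, Real.inv_rpow hP.le, ← Real.rpow_neg (he 0).le,
      ← Real.rpow_neg hP.le, ← Real.rpow_natCast, ← Real.rpow_mul hP.le]
    congr 2
    · ring
    · push_cast; field_simp
  rw [e1]
  refine mul_le_mul_of_nonneg_right ?_ (Real.rpow_nonneg (prod_nonneg fun i _ =>
    (inv_pos.2 (hσpos i)).le) _)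
  have hx : 0 < (e 0)⁻¹ := inv_pos.2 (he 0)
  have ht1 : (1 : ℝ) / (2 * (d + 1)) ≤ 1 := by
    rw [div_le_one (by positivity)]
    have : (0 : ℝ) ≤ d := by positivity
    linarith
  rcases le_total (e 0)⁻¹ 1 with h | h
  · exact (Real.rpow_le_one hx.le h (by positivity)).trans (le_max_left _ _)
  · refine le_trans ?_ (le_max_right _ _)
    calc _ ≤ (e 0)⁻¹ ^ (1 : ℝ) := Real.rpow_le_rpow_of_exponent_le h ht1
      _ = _ := Real.rpow_one _

/-- If all moments of the complex density `k` along `y` vanish and are dominated by a Carleman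
sequence, then the Fourier transform of `k` along `y` vanishes. -/
theorem integral_exp_mul_eq_zero {Ω : Type*} [MeasurableSpace Ω] (ν : Measure Ω)
    (y : Ω → ℝ) (hy : Measurable y) (k : Ω → ℂ)
    (hk : ∀ n : ℕ, Integrable (fun ω => (y ω : ℂ) ^ n * k ω) ν)
    (hk0 : ∀ n : ℕ, ∫ ω, (y ω : ℂ) ^ n * k ω ∂ν = 0) (e : ℕ → ℝ) (he : ∀ d, 0 < e d)
    (hlog : ∀ d, e (d + 1) ^ 2 ≤ e d * e (d + 2))
    (hdiv : ¬ Summable fun d : ℕ => e (d + 1) ^ (-(1 : ℝ) / (2 * (d + 1))))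
    (K : ℝ) (hK : 0 ≤ K) (hbound : ∀ n : ℕ, ∫ ω, |y ω| ^ n * ‖k ω‖ ∂ν ≤ K * √√(e (2 * n))) (s : ℝ) :
    ∫ ω, Complex.exp (Complex.I * (s * y ω : ℝ)) * k ω ∂ν = 0 := by
  obtain ⟨hmono, hdiv'⟩ := carleman_ratio e he hlog hdiv
  have hexp : ∀ s : ℝ, AEStronglyMeasurable
      (fun ω => Complex.exp (Complex.I * (s * y ω : ℝ))) ν := by
    intro s
    refine Measurable.aestronglyMeasurable ?_
    fun_prop
  have hinteg : ∀ (n : ℕ) (s : ℝ), Integrable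
      (fun ω => Complex.exp (Complex.I * (s * y ω : ℝ)) * ((y ω : ℂ) ^ n * k ω)) ν := by
    intro n s
    refine (hk n).bdd_mul (hexp s) (c := 1) (Filter.Eventually.of_forall fun ω => ?_)
    rw [Complex.norm_exp_I_mul_ofReal]
  have hres := quasianalytic_eq_zero
    (fun n s => ∫ ω, Complex.exp (Complex.I * (s * y ω : ℝ)) * ((y ω : ℂ) ^ n * k ω) ∂ν)
    (fun n => K * √√(e (2 * n))) (fun n => √(e (2 * n + 2) / e (2 * n + 1)))
    (fun n => by positivity)
    (fun n => Real.sqrt_pos.2 (div_pos (he _) (he _)))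
    (fun a b hab => hmono (show 2 * a + 1 ≤ 2 * b + 1 by omega))
    (fun n => ?_) (fun n N s h => ?_) (fun n => ?_) hdiv' s
  · simpa using hres
  · have h0 := he (2 * n)
    have h1 := he (2 * n + 1)
    have h2 := he (2 * n + 2)
    have hl := hlog (2 * n)
    have : √√(e (2 * n + 2)) ≤ √(e (2 * n + 2) / e (2 * n + 1)) * √√(e (2 * n)) := by
      rw [← Real.sqrt_mul (by positivity)]
      apply Real.sqrt_le_sqrt
      rw [Real.sqrt_le_left (by positivity), mul_pow, Real.sq_sqrt h0.le, div_pow,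
        div_mul_eq_mul_div,
        le_div_iff₀ (by positivity)]
      nlinarith
    calc K * √√(e (2 * (n + 1))) = K * √√(e (2 * n + 2)) := by ring_nf
      _ ≤ K * (√(e (2 * n + 2) / e (2 * n + 1)) * √√(e (2 * n))) :=
          mul_le_mul_of_nonneg_left this hK
      _ = _ := by ring
  · have heq : ∫ ω, Complex.exp (Complex.I * ((s + h) * y ω : ℝ)) * ((y ω : ℂ) ^ n * k ω) ∂ν -
        ∑ j ∈ range N, (Complex.I * (h : ℝ)) ^ j / (j.factorial : ℂ) *
          ∫ ω, Complex.exp (Complex.I * (s * y ω : ℝ)) * ((y ω : ℂ) ^ (n + j) * k ω) ∂ν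
        = ∫ ω, Complex.exp (Complex.I * (s * y ω : ℝ)) * ((y ω : ℂ) ^ n * k ω) *
          (Complex.exp (Complex.I * (h * y ω : ℝ)) -
            ∑ j ∈ range N, (Complex.I * (h * y ω : ℝ)) ^ j / (j.factorial : ℂ)) ∂ν := by
      simp_rw [← integral_const_mul]
      rw [← integral_finsetSum _ (fun j _ => (hinteg (n + j) s).const_mul _),
        ← integral_sub (hinteg n (s + h))
          (integrable_finsetSum _ (fun j _ => (hinteg (n + j) s).const_mul _))]
      refine integral_congr_ae (Filter.Eventually.of_forall fun ω => ?_)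
      simp only
      rw [mul_sub, mul_sum]
      congr 1
      · rw [add_mul, Complex.ofReal_add, mul_add, Complex.exp_add]; ring
      · refine sum_congr rfl fun j _ => ?_
        push_cast
        ring
    rw [heq]
    have hmaj : Integrable (fun ω => |h| ^ N / N.factorial * (|y ω| ^ (n + N) * ‖k ω‖)) ν := by
      have := ((hk (n + N)).norm).const_mul (|h| ^ N / N.factorial)
      simpa using this
    calc _ ≤ ∫ ω, |h| ^ N / N.factorial * (|y ω| ^ (n + N) * ‖k ω‖) ∂ν := by
          refine norm_integral_le_of_norm_le hmaj (Filter.Eventually.of_forall fun ω => ?_)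
          rw [norm_mul, norm_mul, Complex.norm_exp_I_mul_ofReal, one_mul, norm_mul, norm_pow,
            Complex.norm_real, Real.norm_eq_abs]
          calc _ ≤ |y ω| ^ n * ‖k ω‖ * (|h * y ω| ^ N / N.factorial) :=
                mul_le_mul_of_nonneg_left (norm_exp_I_mul_sub_sum_le N (h * y ω)) (by positivity)
            _ = _ := by rw [abs_mul, mul_pow, pow_add]; ring
      _ = |h| ^ N / N.factorial * ∫ ω, |y ω| ^ (n + N) * ‖k ω‖ ∂ν := integral_const_mul _ _
      _ ≤ _ := mul_le_mul_of_nonneg_left (hbound (n + N)) (by positivity)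
  · simp [hk0]

/-- Cauchy-Schwarz for real integrals. -/
theorem sq_integral_mul_le {Ω : Type*} [MeasurableSpace Ω] {ν : Measure Ω} {f g : Ω → ℝ}
    (hf : Integrable (fun ω => f ω ^ 2) ν) (hg : Integrable (fun ω => g ω ^ 2) ν)
    (hfg : Integrable (fun ω => f ω * g ω) ν) :
    (∫ ω, f ω * g ω ∂ν) ^ 2 ≤ (∫ ω, f ω ^ 2 ∂ν) * ∫ ω, g ω ^ 2 ∂ν := by
  have h : ∀ t : ℝ, 0 ≤ (∫ ω, f ω ^ 2 ∂ν) * (t * t) + (2 * ∫ ω, f ω * g ω ∂ν) * t +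
      ∫ ω, g ω ^ 2 ∂ν := by
    intro t
    have : ∫ ω, (t * f ω + g ω) ^ 2 ∂ν = (∫ ω, f ω ^ 2 ∂ν) * (t * t) +
        (2 * ∫ ω, f ω * g ω ∂ν) * t + ∫ ω, g ω ^ 2 ∂ν := by
      have e : ∀ ω, (t * f ω + g ω) ^ 2 = (t * t) * f ω ^ 2 + (2 * t) * (f ω * g ω) + g ω ^ 2 :=
        fun ω => by ring
      simp_rw [e]
      have hadd : Integrable (fun ω => (t * t) * f ω ^ 2 + (2 * t) * (f ω * g ω)) ν :=
        (hf.const_mul _).add (hfg.const_mul _)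
      rw [integral_add hadd hg,
        integral_add (hf.const_mul _) (hfg.const_mul _), integral_const_mul, integral_const_mul]
      ring
    rw [← this]
    exact integral_nonneg fun ω => sq_nonneg _
  have := discrim_le_zero h
  rw [discrim] at this
  linarith

theorem momentsFinite.integrable_eval {m : ℕ} {ν : Measure (Fin m → ℝ)} (hmom : momentsFinite ν)
    (r : MvPolynomial (Fin m) ℝ) : Integrable (fun y => eval y r) ν := by
  have h := hmom r
  refine h.mono (MvPolynomial.continuous_eval r).aestronglyMeasurable ?_
  exact Filter.Eventually.of_forall fun y => by simp

theorem momentsFinite.integrable_pow {m : ℕ} {ν : Measure (Fin m → ℝ)} (hmom : momentsFinite ν)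
    (j : Fin m) (d : ℕ) : Integrable (fun y : Fin m → ℝ => y j ^ d) ν := by
  simpa using hmom.integrable_eval (X j ^ d)

theorem Carleman.moment_pos {m : ℕ} {ν : Measure (Fin m → ℝ)} (hcar : Carleman ν)
    (hmom : momentsFinite ν) (j : Fin m) (d : ℕ) : 0 < ∫ y, y j ^ (2 * d) ∂ν := by
  have hnn : ∀ y : Fin m → ℝ, 0 ≤ y j ^ (2 * d) := fun y => by rw [pow_mul]; positivity
  refine lt_of_le_of_ne (integral_nonneg hnn) fun h0 => hcar j ?_
  have h1 := (integral_eq_zero_iff_of_nonneg hnn (hmom.integrable_pow j (2 * d))).1 h0.symm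
  have h2 : ∀ d' : ℕ, ∫ y, y j ^ (2 * (d' + 1)) ∂ν = 0 := by
    intro d'
    refine integral_eq_zero_of_ae ?_
    filter_upwards [h1] with y hy
    have : y j = 0 := eq_zero_of_pow_eq_zero hy
    simp [this]
  have h3 : ∀ d' : ℕ, (∫ y, y j ^ (2 * (d' + 1)) ∂ν) ^ (-(1 : ℝ) / (2 * (d' + 1))) = 0 := by
    intro d'
    rw [h2, Real.zero_rpow]
    have : (0 : ℝ) < 2 * (d' + 1) := by positivity
    exact (div_neg_of_neg_of_pos (by norm_num) this).ne
  simp_rw [h3]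
  exact summable_zero

theorem momentsFinite.moment_log_convex {m : ℕ} {ν : Measure (Fin m → ℝ)} (hmom : momentsFinite ν)
    (j : Fin m) (d : ℕ) : (∫ y, y j ^ (2 * (d + 1)) ∂ν) ^ 2 ≤
      (∫ y, y j ^ (2 * d) ∂ν) * ∫ y, y j ^ (2 * (d + 2)) ∂ν := by
  have h := sq_integral_mul_le (ν := ν) (f := fun y : Fin m → ℝ => y j ^ d)
    (g := fun y => y j ^ (d + 2))
    (by simpa [← pow_mul] using hmom.integrable_pow j (d * 2))
    (by simpa [← pow_mul] using hmom.integrable_pow j ((d + 2) * 2))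
    (by simpa [← pow_add] using hmom.integrable_pow j (d + (d + 2)))
  convert h using 4
  · ring
  · ring
  · ring

/-- A density whose products with polynomials integrate to zero vanishes almost everywhere,
provided that its moments are dominated by those of a Carleman measure. -/
theorem ae_eq_zero_of_forall_integral_eval_mul_eq_zero {m : ℕ} {ν : Measure (Fin m → ℝ)}
    (hcar : Carleman ν) (hmom : momentsFinite ν) (b : (Fin m → ℝ) → ℝ)
    (hinteg : ∀ r : MvPolynomial (Fin m) ℝ, Integrable (fun y => eval y r * b y) ν)
    (hzero : ∀ r : MvPolynomial (Fin m) ℝ, ∫ y, eval y r * b y ∂ν = 0)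
    (hbound : ∀ (r : MvPolynomial (Fin m) ℝ) (j : Fin m), ∃ K, 0 ≤ K ∧
      ∀ n : ℕ, ∫ y, |y j| ^ n * |eval y r * b y| ∂ν ≤ K * √√(∫ y, y j ^ (2 * (2 * n)) ∂ν)) :
    b =ᵐ[ν] 0 := by
  have hcint : ∀ (J : Finset (Fin m)) (ξ : Fin m → ℝ) (r : MvPolynomial (Fin m) ℝ),
      Integrable (fun y => Complex.exp (Complex.I * (∑ j ∈ J, ξ j * y j : ℝ)) *
        ((eval y r * b y : ℝ) : ℂ)) ν := by
    intro J ξ r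
    refine (hinteg r).ofReal.bdd_mul (c := 1) ?_ (Filter.Eventually.of_forall fun y => ?_)
    · refine Measurable.aestronglyMeasurable ?_
      fun_prop
    · rw [Complex.norm_exp_I_mul_ofReal]
  have hmul : ∀ (r : MvPolynomial (Fin m) ℝ) (j : Fin m) (n : ℕ) (y : Fin m → ℝ),
      eval y (X j ^ n * r) = y j ^ n * eval y r := by intro r j n y; simp
  have hfour : ∀ (J : Finset (Fin m)) (ξ : Fin m → ℝ) (r : MvPolynomial (Fin m) ℝ),
      ∫ y, Complex.exp (Complex.I * (∑ j ∈ J, ξ j * y j : ℝ)) *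
        ((eval y r * b y : ℝ) : ℂ) ∂ν = 0 := by
    intro J
    induction J using Finset.induction_on with
    | empty =>
      intro ξ r
      have := congrArg (fun x : ℝ => (x : ℂ)) (hzero r)
      simp only [← integral_complex_ofReal] at this
      simpa using this
    | insert j J hj ih =>
      intro ξ r
      obtain ⟨K, hK, hKb⟩ := hbound r j
      have hrw : ∀ (n : ℕ) (y : Fin m → ℝ), (y j : ℂ) ^ n *
          (Complex.exp (Complex.I * (∑ j ∈ J, ξ j * y j : ℝ)) * ((eval y r * b y : ℝ) : ℂ)) =
          Complex.exp (Complex.I * (∑ j ∈ J, ξ j * y j : ℝ)) *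
            ((eval y (X j ^ n * r) * b y : ℝ) : ℂ) := by
        intro n y
        rw [hmul]
        push_cast
        ring
      have h := integral_exp_mul_eq_zero ν (fun y => y j) (measurable_pi_apply j)
        (fun y => Complex.exp (Complex.I * (∑ j ∈ J, ξ j * y j : ℝ)) *
          ((eval y r * b y : ℝ) : ℂ))
        (fun n => by simp_rw [hrw]; exact hcint J ξ _)
        (fun n => by simp_rw [hrw]; exact ih ξ _)
        (fun d => ∫ y, y j ^ (2 * d) ∂ν) (hcar.moment_pos hmom j) (hmom.moment_log_convex j)
        (hcar j) K hK
        (fun n => by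
          refine le_trans (le_of_eq ?_) (hKb n)
          congr 1
          funext y
          rw [norm_mul, Complex.norm_exp_I_mul_ofReal, one_mul, Complex.norm_real,
            Real.norm_eq_abs])
        (ξ j)
      rw [← h]
      congr 1
      funext y
      rw [sum_insert hj, Complex.ofReal_add, mul_add, Complex.exp_add, mul_assoc]
  have hb : Integrable b ν := by simpa using hinteg 1
  have hb1 : Integrable (fun y => max (b y) 0) ν := hb.pos_part
  have hb2 : Integrable (fun y => max (-b y) 0) ν := hb.neg_part
  have hden : ∀ f : (Fin m → ℝ) → ℝ, Integrable f ν → (∀ y, 0 ≤ f y) →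
      ∀ L : StrongDual ℝ (Fin m → ℝ), charFunDual (ν.withDensity fun y => ENNReal.ofReal (f y)) L =
        ∫ y, Complex.exp (Complex.I * (∑ j, L (Pi.single j 1) * y j : ℝ)) * (f y : ℂ) ∂ν := by
    intro f hf hf0 L
    rw [charFunDual_apply, integral_withDensity_eq_integral_toReal_smul₀
      hf.aemeasurable.ennreal_ofReal (Filter.Eventually.of_forall fun y => ENNReal.ofReal_lt_top)]
    congr 1
    funext y
    rw [ENNReal.toReal_ofReal (hf0 y)]
    have hL : L y = ∑ j, L (Pi.single j 1) * y j := by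
      conv_lhs => rw [← Finset.univ_sum_single y]
      rw [map_sum]
      refine sum_congr rfl fun j _ => ?_
      have : (Pi.single j (y j) : Fin m → ℝ) = y j • Pi.single j 1 := by
        rw [← Pi.single_smul]; simp
      rw [this, map_smul, smul_eq_mul, mul_comm]
    rw [hL, Complex.real_smul, mul_comm (Complex.I)]
    ring
  have hbc : ∀ f : (Fin m → ℝ) → ℝ, Integrable f ν → ∀ ξ : Fin m → ℝ,
      Integrable (fun y => Complex.exp (Complex.I * (∑ j, ξ j * y j : ℝ)) * (f y : ℂ)) ν := by
    intro f hf ξ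
    refine hf.ofReal.bdd_mul (c := 1) ?_ (Filter.Eventually.of_forall fun y => ?_)
    · refine Measurable.aestronglyMeasurable ?_
      fun_prop
    · rw [Complex.norm_exp_I_mul_ofReal]
  have : IsFiniteMeasure (ν.withDensity fun y => ENNReal.ofReal (max (b y) 0)) :=
    isFiniteMeasure_withDensity_ofReal hb1.2
  have : IsFiniteMeasure (ν.withDensity fun y => ENNReal.ofReal (max (-b y) 0)) :=
    isFiniteMeasure_withDensity_ofReal hb2.2
  have heq : (ν.withDensity fun y => ENNReal.ofReal (max (b y) 0)) =
      ν.withDensity fun y => ENNReal.ofReal (max (-b y) 0) := by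
    refine Measure.ext_of_charFunDual (funext fun L => ?_)
    rw [hden _ hb1 (fun y => le_max_right _ _), hden _ hb2 (fun y => le_max_right _ _),
      ← sub_eq_zero, ← integral_sub (hbc _ hb1 _) (hbc _ hb2 _)]
    have := hfour univ (fun j => L (Pi.single j 1)) 1
    rw [← this]
    congr 1
    funext y
    rw [← mul_sub, ← Complex.ofReal_sub]
    congr 2
    rw [map_one, one_mul]
    rcases le_total (b y) 0 with h | h
    · rw [max_eq_right h, max_eq_left (by linarith)]; ring
    · rw [max_eq_left h, max_eq_right (by linarith)]; ring
  have hfin : ∫⁻ y, ENNReal.ofReal (max (b y) 0) ∂ν ≠ ⊤ := hb1.lintegral_lt_top.ne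
  have hae := (withDensity_eq_iff hb1.aemeasurable.ennreal_ofReal
    hb2.aemeasurable.ennreal_ofReal hfin).1 heq
  filter_upwards [hae] with y hy
  have h' := (ENNReal.ofReal_eq_ofReal_iff (le_max_right _ _) (le_max_right _ _)).1 hy
  rcases le_total (b y) 0 with h | h
  · rw [max_eq_right h, max_eq_left (by linarith)] at h'; simp only [Pi.zero_apply]; linarith
  · rw [max_eq_left h, max_eq_right (by linarith)] at h'; simp only [Pi.zero_apply]; linarith

/-- Polynomials multiplied by `√(1 + a²)` are square integrable. -/
theorem momentsFinite.memLp_eval_mul_sqrt {m : ℕ} {ν : Measure (Fin m → ℝ)}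
    (hmom : momentsFinite ν) (a t : MvPolynomial (Fin m) ℝ) :
    MemLp (fun y => eval y t * √(1 + eval y a ^ 2)) 2 ν := by
  have hcont : Continuous fun y => eval y t * √(1 + eval y a ^ 2) :=
    (MvPolynomial.continuous_eval t).mul (Real.continuous_sqrt.comp
      (continuous_const.add ((MvPolynomial.continuous_eval a).pow 2)))
  refine (memLp_two_iff_integrable_sq hcont.aestronglyMeasurable).2 ?_
  refine (hmom.integrable_eval (t ^ 2 * (1 + a ^ 2))).congr
    (Filter.Eventually.of_forall fun y => ?_)
  have hsq : √(1 + eval y a ^ 2) ^ 2 = 1 + eval y a ^ 2 := Real.sq_sqrt (by positivity)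
  simp only [mul_pow, hsq]
  simp

/-- Polynomials, multiplied by the weight `√(1 + a²)`, are dense in `L²(ν)` for a Carleman
measure `ν`; in approximation form. -/
theorem exists_polynomial_approx {m : ℕ} {ν : Measure (Fin m → ℝ)}
    (hcar : Carleman ν) (hmom : momentsFinite ν) (a : MvPolynomial (Fin m) ℝ)
    (f : (Fin m → ℝ) → ℝ) (hf : MemLp f 2 ν) (δ : ℝ) (hδ : 0 < δ) :
    ∃ t : MvPolynomial (Fin m) ℝ,
      ∫ y, (eval y t * √(1 + eval y a ^ 2) - f y) ^ 2 ∂ν < δ := by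
  set w : (Fin m → ℝ) → ℝ := fun y => √(1 + eval y a ^ 2) with hw
  have hwsq : ∀ y, w y ^ 2 = 1 + eval y a ^ 2 := fun y => Real.sq_sqrt (by positivity)
  have hmem : ∀ t : MvPolynomial (Fin m) ℝ, MemLp (fun y => eval y t * w y) 2 ν :=
    hmom.memLp_eval_mul_sqrt a
  let T : MvPolynomial (Fin m) ℝ →ₗ[ℝ] Lp ℝ 2 ν :=
    { toFun := fun t => (hmem t).toLp _
      map_add' := fun s t => by
        rw [← MemLp.toLp_add]
        refine MemLp.toLp_congr _ _ (Filter.Eventually.of_forall fun y => ?_)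
        simp [add_mul]
      map_smul' := fun c t => by
        rw [RingHom.id_apply, ← MemLp.toLp_const_smul]
        refine MemLp.toLp_congr _ _ (Filter.Eventually.of_forall fun y => ?_)
        simp [mul_assoc] }
  have hbot : (LinearMap.range T)ᗮ = ⊥ := by
    rw [Submodule.eq_bot_iff]
    intro g hg
    have hgm : MemLp g 2 ν := Lp.memLp g
    have horth : ∀ t, ∫ y, eval y t * (w y * g y) ∂ν = 0 := by
      intro t
      have h := (Submodule.mem_orthogonal _ g).1 hg (T t) ⟨t, rfl⟩
      rw [L2.inner_def] at h
      rw [← h]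
      refine integral_congr_ae ?_
      filter_upwards [(hmem t).coeFn_toLp] with y hy
      change _ = inner ℝ (((hmem t).toLp _ : Lp ℝ 2 ν) y) (g y)
      rw [hy]
      simp only [RCLike.inner_apply, conj_trivial]
      ring
    have hgint : ∀ t, Integrable (fun y => eval y t * (w y * g y)) ν := by
      intro t
      have := (hmem t).integrable_mul hgm
      refine this.congr (Filter.Eventually.of_forall fun y => ?_)
      simp only [Pi.mul_apply]
      ring
    have hg2 : Integrable (fun y => |g y| ^ 2) ν := by
      simp only [sq_abs]
      exact (memLp_two_iff_integrable_sq hgm.1).1 hgm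
    have hae := ae_eq_zero_of_forall_integral_eval_mul_eq_zero hcar hmom (fun y => w y * g y)
      hgint horth ?_
    · rw [Lp.eq_zero_iff_ae_eq_zero]
      filter_upwards [hae] with y hy
      have hwpos : 0 < w y := Real.sqrt_pos.2 (by positivity)
      simpa [hwpos.ne'] using hy
    · intro r j
      refine ⟨√(∫ y, |g y| ^ 2 ∂ν) * √√(∫ y, (eval y (r ^ 2 * (1 + a ^ 2))) ^ 2 ∂ν),
        by positivity, fun n => ?_⟩
      have h1 := sq_integral_mul_le (ν := ν)
        (f := fun y : Fin m → ℝ => |y j ^ n * (eval y r * w y)|)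
        (g := fun y => |g y|)
        (by
          have := (memLp_two_iff_integrable_sq (hmem (X j ^ n * r)).1).1 (hmem (X j ^ n * r))
          refine this.congr (Filter.Eventually.of_forall fun y => ?_)
          simp only [sq_abs]
          simp [mul_assoc]) hg2
        (by
          have := (hgint (X j ^ n * r)).abs
          refine this.congr (Filter.Eventually.of_forall fun y => ?_)
          simp only
          rw [← abs_mul]
          congr 1
          simp
          ring)
      have h2 := sq_integral_mul_le (ν := ν) (f := fun y : Fin m → ℝ => y j ^ (2 * n))
        (g := fun y => eval y (r ^ 2 * (1 + a ^ 2)))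
        (by simpa [← pow_mul] using hmom.integrable_pow j (2 * n * 2))
        ((hmom.integrable_eval ((r ^ 2 * (1 + a ^ 2)) ^ 2)).congr
          (Filter.Eventually.of_forall fun y => by simp))
        ((hmom.integrable_eval (X j ^ (2 * n) * (r ^ 2 * (1 + a ^ 2)))).congr
          (Filter.Eventually.of_forall fun y => by simp))
      have e1 : ∫ y, |y j| ^ n * |eval y r * (w y * g y)| ∂ν
          = ∫ y, |y j ^ n * (eval y r * w y)| * |g y| ∂ν := by
        congr 1
        funext y
        rw [← abs_pow, ← abs_mul, ← abs_mul]
        congr 1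
        ring
      have e2 : ∫ y, |y j ^ n * (eval y r * w y)| ^ 2 ∂ν
          = ∫ y, y j ^ (2 * n) * eval y (r ^ 2 * (1 + a ^ 2)) ∂ν := by
        congr 1
        funext y
        rw [sq_abs, mul_pow, mul_pow, hwsq]
        simp only [map_mul, map_pow, map_add, map_one]
        ring
      have e3 : ∫ y : Fin m → ℝ, (y j ^ (2 * n)) ^ 2 ∂ν = ∫ y, y j ^ (2 * (2 * n)) ∂ν := by
        congr 1
        funext y
        ring
      rw [e2] at h1
      rw [e3] at h2
      rw [e1]
      have h3 := Real.le_sqrt_of_sq_le h1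
      have h4 := Real.le_sqrt_of_sq_le h2
      refine h3.trans ?_
      rw [mul_assoc, ← Real.sqrt_mul (by positivity), ← Real.sqrt_mul (by positivity)]
      apply Real.sqrt_le_sqrt
      rw [mul_comm]
      refine mul_le_mul_of_nonneg_left ?_ (by positivity)
      refine h4.trans (le_of_eq ?_)
      rw [Real.sqrt_mul (integral_nonneg fun y => by rw [pow_mul]; positivity), mul_comm]
  have htop : (LinearMap.range T).topologicalClosure = ⊤ :=
    Submodule.topologicalClosure_eq_top_iff.2 hbot
  have hclos : hf.toLp f ∈ closure (LinearMap.range T : Set (Lp ℝ 2 ν)) := by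
    rw [← Submodule.topologicalClosure_coe, htop]
    trivial
  obtain ⟨_, ⟨t, rfl⟩, ht⟩ := Metric.mem_closure_iff.1 hclos (√δ) (Real.sqrt_pos.2 hδ)
  refine ⟨t, ?_⟩
  have hsub : MemLp (fun y => eval y t * w y - f y) 2 ν := (hmem t).sub hf
  have hTt : T t - hf.toLp f = hsub.toLp _ := rfl
  have hn : ∫ y, (eval y t * w y - f y) ^ 2 ∂ν = ‖hsub.toLp _‖ ^ 2 := by
    rw [← real_inner_self_eq_norm_sq, L2.inner_def]
    refine integral_congr_ae ?_
    filter_upwards [hsub.coeFn_toLp] with y hy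
    rw [hy, real_inner_self_eq_norm_sq, Real.norm_eq_abs, sq_abs]
  rw [dist_comm, dist_eq_norm, hTt] at ht
  rw [hn]
  calc ‖hsub.toLp _‖ ^ 2 < √δ ^ 2 := pow_lt_pow_left₀ ht (norm_nonneg _) two_ne_zero
    _ = δ := Real.sq_sqrt hδ.le

/-- A polynomial which is nonnegative in the quadratic sense against a Carleman measure is
nonnegative on the support. -/
theorem eval_nonneg_of_forall_integral_sq_mul_nonneg {m : ℕ} {ν : Measure (Fin m → ℝ)}
    {Y : Set (Fin m → ℝ)} (hsupp : hasSupport ν Y)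
    (hcar : Carleman ν) (hmom : momentsFinite ν) (a : MvPolynomial (Fin m) ℝ)
    (ha : ∀ t : MvPolynomial (Fin m) ℝ, 0 ≤ ∫ y, eval y t ^ 2 * eval y a ∂ν) :
    ∀ y ∈ Y, 0 ≤ eval y a := by
  intro y₀ hy₀
  by_contra! hneg
  have hfin : IsFiniteMeasure ν := by
    have := hmom.integrable_eval 1
    simp only [map_one] at this
    exact (integrable_const_iff_isFiniteMeasure one_ne_zero).1 this
  set U : Set (Fin m → ℝ) := {y | eval y a < eval y₀ a / 2} with hU
  have hUo : IsOpen U := isOpen_lt (MvPolynomial.continuous_eval a) continuous_const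
  have hyU : y₀ ∈ U := by
    change eval y₀ a < eval y₀ a / 2
    linarith
  have hUpos : 0 < ν U := hsupp.2 U hUo ⟨y₀, hyU, hy₀⟩
  have hUr : 0 < ν.real U := ENNReal.toReal_pos hUpos.ne' (measure_ne_top _ _)
  set w : (Fin m → ℝ) → ℝ := fun y => √(1 + eval y a ^ 2) with hw
  have hwsq : ∀ y, w y ^ 2 = 1 + eval y a ^ 2 := fun y => Real.sq_sqrt (by positivity)
  have hwcont : Continuous w :=
    Real.continuous_sqrt.comp (continuous_const.add ((MvPolynomial.continuous_eval a).pow 2))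
  have hwint : Integrable (fun y => w y ^ 2) ν := by
    refine (hmom.integrable_eval (1 + a ^ 2)).congr (Filter.Eventually.of_forall fun y => ?_)
    simp [hwsq]
  have hw2 : MemLp w 2 ν := (memLp_two_iff_integrable_sq hwcont.aestronglyMeasurable).2 hwint
  set f : (Fin m → ℝ) → ℝ := U.indicator w with hf
  have hfm : MemLp f 2 ν := hw2.indicator hUo.measurableSet
  have hf2 : Integrable (fun y => f y ^ 2) ν := (memLp_two_iff_integrable_sq hfm.1).1 hfm
  set A : ℝ := ∫ y, f y ^ 2 ∂ν with hA
  have hA0 : 0 ≤ A := integral_nonneg fun y => sq_nonneg _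
  set c : ℝ := -(eval y₀ a / 2) * ν.real U with hc
  have hcpos : 0 < c := mul_pos (by linarith) hUr
  obtain ⟨η, hη0, hη⟩ : ∃ η : ℝ, 0 < η ∧ η ^ 2 + η + η * A < c := by
    have hη0 : 0 < min 1 (c / (2 * (2 + A))) := by positivity
    refine ⟨min 1 (c / (2 * (2 + A))), hη0, ?_⟩
    set η := min 1 (c / (2 * (2 + A)))
    have h1 : η ≤ 1 := min_le_left _ _
    have h2 : η * (2 * (2 + A)) ≤ c := by
      rw [← le_div_iff₀ (by positivity)]; exact min_le_right _ _
    nlinarith [mul_nonneg hη0.le hA0]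
  obtain ⟨t, ht⟩ := exists_polynomial_approx hcar hmom a f hfm (η ^ 2) (by positivity)
  have hg : MemLp (fun y => eval y t * w y - f y) 2 ν :=
    (hmom.memLp_eval_mul_sqrt a t).sub hfm
  have hg2 : Integrable (fun y => (eval y t * w y - f y) ^ 2) ν :=
    (memLp_two_iff_integrable_sq hg.1).1 hg
  have hta : Integrable (fun y => eval y t ^ 2 * eval y a) ν := by
    exact (hmom.integrable_eval (t ^ 2 * a)).congr (Filter.Eventually.of_forall fun y => by simp)
  have hUa : Integrable (U.indicator fun y => eval y a) ν :=
    (hmom.integrable_eval a).indicator hUo.measurableSet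
  have hptw : ∀ y, eval y t ^ 2 * eval y a ≤ U.indicator (fun y => eval y a) y +
      ((1 + η⁻¹) * (eval y t * w y - f y) ^ 2 + η * f y ^ 2) := by
    intro y
    have habs : |eval y a| ≤ w y ^ 2 := by
      rw [hwsq, abs_le]
      constructor <;> nlinarith [sq_nonneg (eval y a - 1), sq_nonneg (eval y a + 1)]
    have key : ∀ u v A W : ℝ, |A| ≤ W ^ 2 → (u ^ 2 - v ^ 2) * A ≤
        (1 + η⁻¹) * (u * W - v * W) ^ 2 + η * (v * W) ^ 2 := by
      intro u v A W hAW
      have h1 : |u ^ 2 - v ^ 2| * W ^ 2 ≤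
          ((u - v) ^ 2 + 2 * |u - v| * |v|) * W ^ 2 := by
        refine mul_le_mul_of_nonneg_right ?_ (sq_nonneg _)
        calc |u ^ 2 - v ^ 2| = |(u - v) ^ 2 + 2 * (u - v) * v| := by ring_nf
          _ ≤ |(u - v) ^ 2| + |2 * (u - v) * v| := abs_add_le _ _
          _ = _ := by rw [abs_mul, abs_mul, abs_two, abs_of_nonneg (sq_nonneg (u - v))]
      have h2 : 2 * |u - v| * |v| ≤ η⁻¹ * (u - v) ^ 2 + η * v ^ 2 := by
        have : 0 ≤ η⁻¹ * (|u - v| - η * |v|) ^ 2 := by positivity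
        have e : η⁻¹ * (|u - v| - η * |v|) ^ 2 =
            η⁻¹ * |u - v| ^ 2 - 2 * |u - v| * |v| + η * |v| ^ 2 := by
          field_simp
          ring
        rw [e, sq_abs, sq_abs] at this
        linarith
      calc (u ^ 2 - v ^ 2) * A ≤ |u ^ 2 - v ^ 2| * |A| := by
            rw [← abs_mul]; exact le_abs_self _
        _ ≤ |u ^ 2 - v ^ 2| * W ^ 2 := mul_le_mul_of_nonneg_left hAW (abs_nonneg _)
        _ ≤ _ := h1
        _ ≤ ((u - v) ^ 2 + (η⁻¹ * (u - v) ^ 2 + η * v ^ 2)) * W ^ 2 := by gcongr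
        _ = _ := by ring
    by_cases hyU : y ∈ U
    · have := key (eval y t) 1 (eval y a) (w y) habs
      simp only [hf, Set.indicator_of_mem hyU]
      simp only [one_mul] at this
      linarith
    · have := key (eval y t) 0 (eval y a) (w y) habs
      simp only [hf, Set.indicator_of_notMem hyU]
      simp only [zero_mul] at this
      linarith
  have hinteg := integral_mono hta
    (hUa.add ((hg2.const_mul (1 + η⁻¹)).add (hf2.const_mul η))) hptw
  have hsum : ∫ y, (U.indicator (fun y => eval y a) y +
      ((1 + η⁻¹) * (eval y t * w y - f y) ^ 2 + η * f y ^ 2)) ∂ν =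
      ∫ y in U, eval y a ∂ν + ((1 + η⁻¹) * ∫ y, (eval y t * w y - f y) ^ 2 ∂ν + η * A) := by
    have hadd : Integrable (fun y => (1 + η⁻¹) * (eval y t * w y - f y) ^ 2 + η * f y ^ 2) ν :=
      (hg2.const_mul (1 + η⁻¹)).add (hf2.const_mul η)
    rw [integral_add hUa hadd, integral_add (hg2.const_mul _) (hf2.const_mul _),
      integral_const_mul, integral_const_mul, integral_indicator hUo.measurableSet]
  have hUle : ∫ y in U, eval y a ∂ν ≤ -c := by
    have h1 : ∫ y in U, eval y a ∂ν ≤ ∫ _ in U, eval y₀ a / 2 ∂ν :=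
      setIntegral_mono_on (hmom.integrable_eval a).integrableOn
        (integrable_const _).integrableOn hUo.measurableSet fun y hy => le_of_lt hy
    rw [setIntegral_const, smul_eq_mul] at h1
    rw [hc]
    linarith
  have hη1 : (1 + η⁻¹) * ∫ y, (eval y t * w y - f y) ^ 2 ∂ν ≤ η ^ 2 + η := by
    calc _ ≤ (1 + η⁻¹) * η ^ 2 := mul_le_mul_of_nonneg_left ht.le (by positivity)
      _ = _ := by field_simp
  have := ha t
  have := hinteg.trans_eq hsum
  linarith

theorem eval_sumElim_eq_eval_bind {n m : ℕ} (c : Fin n → ℝ) (y : Fin m → ℝ)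
    (r : MvPolynomial (Fin n ⊕ Fin m) ℝ) :
    eval y (bind₁ (Sum.elim (fun i => C (c i)) X) r) = eval (Sum.elim c y) r := by
  simp only [eval, eval₂Hom_bind₁]
  congr 2
  funext i
  rcases i with i | j <;> simp

theorem momentsFinite.integrable_eval_sumElim {n m : ℕ} {ν : Measure (Fin m → ℝ)}
    (hmom : momentsFinite ν) (c : Fin n → ℝ) (r : MvPolynomial (Fin n ⊕ Fin m) ℝ) :
    Integrable (fun y => eval (Sum.elim c y) r) ν := by
  simp_rw [← eval_sumElim_eq_eval_bind]
  exact hmom.integrable_eval _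

theorem momentsFinite.eval_integY {n m : ℕ} {ν : Measure (Fin m → ℝ)}
    (hmom : momentsFinite ν) (c : Fin n → ℝ) (r : MvPolynomial (Fin n ⊕ Fin m) ℝ) :
    eval c (integY ν r) = ∫ y, eval (Sum.elim c y) r ∂ν := by
  have hterm : ∀ (d : (Fin n ⊕ Fin m) →₀ ℕ) (y : Fin m → ℝ),
      eval (Sum.elim c y) (monomial d (r.coeff d)) =
        (r.coeff d * ∏ i, c i ^ d (Sum.inl i)) * ∏ j, y j ^ d (Sum.inr j) := by
    intro d y
    rw [eval_monomial, Finsupp.prod_fintype _ _ (fun i => pow_zero _), Fintype.prod_sum_type]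
    simp [mul_assoc]
  have hr : ∀ y, eval (Sum.elim c y) r =
      ∑ d ∈ r.support, eval (Sum.elim c y) (monomial d (r.coeff d)) := by
    intro y
    rw [← map_sum, support_sum_monomial_coeff]
  simp_rw [hr]
  rw [integral_finsetSum _ fun d _ => hmom.integrable_eval_sumElim c _, integY, map_sum]
  refine Finset.sum_congr rfl fun d _ => ?_
  simp_rw [hterm]
  rw [integral_const_mul, eval_monomial, Finsupp.prod_fintype _ _ (fun i => pow_zero _)]
  simp only [xPart, Finsupp.comapDomain_apply]
  ring

theorem momentsFinite.integY_add {n m : ℕ} {ν : Measure (Fin m → ℝ)} (hmom : momentsFinite ν)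
    (r s : MvPolynomial (Fin n ⊕ Fin m) ℝ) :
    integY ν (r + s) = integY ν r + integY ν s := by
  refine MvPolynomial.funext fun c => ?_
  simp only [map_add, hmom.eval_integY]
  exact integral_add (hmom.integrable_eval_sumElim c r) (hmom.integrable_eval_sumElim c s)

theorem momentsFinite.integY_rename_mul {n m : ℕ} {ν : Measure (Fin m → ℝ)}
    (hmom : momentsFinite ν) (t : MvPolynomial (Fin n) ℝ) (r : MvPolynomial (Fin n ⊕ Fin m) ℝ) :
    integY ν (rename Sum.inl t * r) = t * integY ν r := by
  refine MvPolynomial.funext fun c => ?_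
  simp only [map_mul, hmom.eval_integY, eval_rename, Sum.elim_comp_inl]
  exact integral_const_mul _ _

theorem momentsFinite.integY_smul {n m : ℕ} {ν : Measure (Fin m → ℝ)}
    (hmom : momentsFinite ν) (a : ℝ) (r : MvPolynomial (Fin n ⊕ Fin m) ℝ) :
    integY ν (a • r) = a • integY ν r := by
  have h := hmom.integY_rename_mul (C a) r
  rwa [rename_C, ← smul_eq_C_mul, ← smul_eq_C_mul] at h

theorem IsSOSMatrix.zero {σ ι : Type*} [Fintype ι] :
    IsSOSMatrix (0 : Matrix ι ι (MvPolynomial σ ℝ)) :=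
  ⟨0, 0, by simp⟩

theorem IsSOSMatrix.add {σ ι : Type*} [Fintype ι] {M N : Matrix ι ι (MvPolynomial σ ℝ)}
    (hM : IsSOSMatrix M) (hN : IsSOSMatrix N) : IsSOSMatrix (M + N) := by
  obtain ⟨l, T, rfl⟩ := hM
  obtain ⟨l', T', rfl⟩ := hN
  refine ⟨l + l', Matrix.of fun r => Fin.addCases (fun i => T i) (fun i => T' i) r, ?_⟩
  ext1 i j
  simp [Matrix.mul_apply, Fin.sum_univ_add]

theorem IsSOSMatrix.mul_self_smul {σ ι : Type*} [Fintype ι] {M : Matrix ι ι (MvPolynomial σ ℝ)}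
    (hM : IsSOSMatrix M) (t : MvPolynomial σ ℝ) : IsSOSMatrix ((t * t) • M) := by
  obtain ⟨l, T, rfl⟩ := hM
  exact ⟨l, t • T, by simp [smul_smul]⟩

theorem IsSOSMatrix.smul {σ ι : Type*} [Fintype ι] {M : Matrix ι ι (MvPolynomial σ ℝ)}
    (hM : IsSOSMatrix M) {a : ℝ} (ha : 0 ≤ a) : IsSOSMatrix (a • M) := by
  have h := hM.mul_self_smul (C (√a))
  rw [← C_mul, Real.mul_self_sqrt ha] at h
  convert h using 1
  ext1 i j
  simp [smul_eq_C_mul]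

theorem IsSOSMatrix.vecMulVec_self {σ ι : Type*} [Fintype ι] (v : ι → MvPolynomial σ ℝ) :
    IsSOSMatrix (vecMulVec v v) := by
  refine ⟨1, Matrix.of fun _ => v, ?_⟩
  ext1 i j
  simp [Matrix.mul_apply, vecMulVec_apply]

theorem IsSOSMatrix.isSymm {σ ι : Type*} [Fintype ι] {M : Matrix ι ι (MvPolynomial σ ℝ)}
    (hM : IsSOSMatrix M) : M.IsSymm := by
  obtain ⟨l, T, rfl⟩ := hM
  simp [Matrix.IsSymm, Matrix.transpose_mul]

theorem lram_add {R ιp ιq : Type*} [CommSemiring R] [Fintype ιq]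
    (A A' : Matrix (ιp × ιq) (ιp × ιq) R) (B : Matrix ιq ιq R) :
    lram (A + A') B = lram A B + lram A' B := by
  ext1 i j
  simp [lram, add_mul, Finset.sum_add_distrib]

theorem lram_smul {R ιp ιq : Type*} [CommSemiring R] [Fintype ιq] (r : R)
    (A : Matrix (ιp × ιq) (ιp × ιq) R) (B : Matrix ιq ιq R) :
    lram (r • A) B = r • lram A B := by
  ext1 i j
  simp [lram, mul_assoc, Finset.mul_sum]

theorem lram_zero {R ιp ιq : Type*} [CommSemiring R] [Fintype ιq] (B : Matrix ιq ιq R) :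
    lram (0 : Matrix (ιp × ιq) (ιp × ιq) R) B = 0 := by
  ext1 i j
  simp [lram]

theorem lram_isSymm {R ιp ιq : Type*} [CommSemiring R] [Fintype ιq]
    {A : Matrix (ιp × ιq) (ιp × ιq) R} {B : Matrix ιq ιq R} (hA : A.IsSymm) (hB : B.IsSymm) :
    (lram A B).IsSymm := by
  ext1 i j
  simp only [lram, transpose_apply, of_apply]
  rw [Finset.sum_comm]
  refine Finset.sum_congr rfl fun a _ => Finset.sum_congr rfl fun c _ => ?_
  rw [hA.apply, hB.apply]

section Degrees

variable {n m : ℕ} {ι σ : Type*} [Fintype ι]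

theorem matDeg_le_iff {M : Matrix ι ι (MvPolynomial σ ℝ)} {d : ℕ} :
    matDeg M ≤ d ↔ ∀ i j, (M i j).totalDegree ≤ d := by
  simp [matDeg, Finset.sup_le_iff]

theorem matDegX_le_iff {M : Matrix ι ι (MvPolynomial (Fin n ⊕ Fin m) ℝ)} {d : ℕ} :
    matDegX M ≤ d ↔ ∀ i j, ∀ e ∈ (M i j).support, ∑ i : Fin n, e (Sum.inl i) ≤ d := by
  simp only [matDegX, degX, Finset.sup_le_iff, Finset.mem_univ, true_imp_iff]

theorem matDegY_le_iff {M : Matrix ι ι (MvPolynomial (Fin n ⊕ Fin m) ℝ)} {d : ℕ} :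
    matDegY M ≤ d ↔ ∀ i j, ∀ e ∈ (M i j).support, ∑ j : Fin m, e (Sum.inr j) ≤ d := by
  simp only [matDegY, degY, Finset.sup_le_iff, Finset.mem_univ, true_imp_iff]

end Degrees

/-- `H` has a certificate of degree `(d, k)`. -/
def HasCert {n m p q : ℕ} (ν : Measure (Fin m → ℝ))
    (G : Matrix (Fin q) (Fin q) (MvPolynomial (Fin n ⊕ Fin m) ℝ)) (d k : ℕ)
    (H : Matrix (Fin p) (Fin p) (MvPolynomial (Fin n) ℝ)) : Prop :=
  ∃ (S0 : Matrix (Fin p) (Fin p) (MvPolynomial (Fin n) ℝ))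
    (Sg : Matrix (Fin p × Fin q) (Fin p × Fin q) (MvPolynomial (Fin n ⊕ Fin m) ℝ)),
    IsSOSMatrix S0 ∧ matDeg S0 ≤ 2 * d ∧ IsSOSMatrix Sg ∧
    matDegX Sg ≤ 2 * d - 2 * ((matDegX G + 1) / 2) ∧ matDegY Sg ≤ 2 * k ∧
    H = S0 + (lram Sg G).map (integY ν)

section Cert

variable {n m p q : ℕ} {ν : Measure (Fin m → ℝ)}
  {G : Matrix (Fin q) (Fin q) (MvPolynomial (Fin n ⊕ Fin m) ℝ)} {d k : ℕ}

theorem hasCert_of_isSOSMatrix {S : Matrix (Fin p) (Fin p) (MvPolynomial (Fin n) ℝ)}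
    (hS : IsSOSMatrix S) (hd : matDeg S ≤ 2 * d) : HasCert ν G d k S := by
  refine ⟨S, 0, hS, hd, .zero, ?_, ?_, ?_⟩
  · simp [matDegX_le_iff]
  · simp [matDegY_le_iff]
  · rw [lram_zero]
    ext1 i j
    simp [integY]

theorem HasCert.add (hmom : momentsFinite ν)
    {H H' : Matrix (Fin p) (Fin p) (MvPolynomial (Fin n) ℝ)}
    (hH : HasCert ν G d k H) (hH' : HasCert ν G d k H') : HasCert ν G d k (H + H') := by
  classical
  obtain ⟨S, P, hS, hSd, hP, hPx, hPy, rfl⟩ := hH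
  obtain ⟨S', P', hS', hSd', hP', hPx', hPy', rfl⟩ := hH'
  refine ⟨S + S', P + P', hS.add hS', ?_, hP.add hP', ?_, ?_, ?_⟩
  · exact matDeg_le_iff.2 fun i j => (totalDegree_add _ _).trans
      (max_le (matDeg_le_iff.1 hSd i j) (matDeg_le_iff.1 hSd' i j))
  · refine matDegX_le_iff.2 fun i j e he => ?_
    rcases Finset.mem_union.1 (support_add he) with h | h
    exacts [matDegX_le_iff.1 hPx i j e h, matDegX_le_iff.1 hPx' i j e h]
  · refine matDegY_le_iff.2 fun i j e he => ?_
    rcases Finset.mem_union.1 (support_add he) with h | h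
    exacts [matDegY_le_iff.1 hPy i j e h, matDegY_le_iff.1 hPy' i j e h]
  · rw [lram_add]
    ext1 i j
    simp only [Matrix.add_apply, Matrix.map_apply, hmom.integY_add]
    ring

theorem HasCert.smul (hmom : momentsFinite ν)
    {H : Matrix (Fin p) (Fin p) (MvPolynomial (Fin n) ℝ)} (hH : HasCert ν G d k H)
    {a : ℝ} (ha : 0 ≤ a) : HasCert ν G d k (a • H) := by
  obtain ⟨S, P, hS, hSd, hP, hPx, hPy, rfl⟩ := hH
  refine ⟨a • S, a • P, hS.smul ha, ?_, hP.smul ha, ?_, ?_, ?_⟩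
  · exact matDeg_le_iff.2 fun i j => (totalDegree_smul_le _ _).trans (matDeg_le_iff.1 hSd i j)
  · exact matDegX_le_iff.2 fun i j e he => matDegX_le_iff.1 hPx i j e (support_smul he)
  · exact matDegY_le_iff.2 fun i j e he => matDegY_le_iff.1 hPy i j e (support_smul he)
  · have h : lram (a • P) G = a • lram P G := by
      ext1 i j
      simp [lram, Finset.smul_sum]
    rw [h]
    ext1 i j
    simp only [Matrix.add_apply, Matrix.map_apply, Matrix.smul_apply, hmom.integY_smul, smul_add]

/-- The certificates of degree `(d, k)` as a convex cone of polynomial matrices. -/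
def certCone (p : ℕ) (hmom : momentsFinite ν)
    (G : Matrix (Fin q) (Fin q) (MvPolynomial (Fin n ⊕ Fin m) ℝ)) (d k : ℕ) :
    PointedCone ℝ (Matrix (Fin p) (Fin p) (MvPolynomial (Fin n) ℝ)) where
  carrier := {H | HasCert ν G d k H}
  zero_mem' := hasCert_of_isSOSMatrix .zero (by simp [matDeg_le_iff])
  add_mem' hH hH' := HasCert.add hmom hH hH'
  smul_mem' a _ hH := HasCert.smul hmom hH a.2

theorem vecMulVec_mem_certCone (hmom : momentsFinite ν)
    (v : Fin p → MvPolynomial (Fin n) ℝ) (hv : ∀ a, (v a).totalDegree ≤ d) :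
    vecMulVec v v ∈ certCone p hmom G d k := by
  refine hasCert_of_isSOSMatrix (.vecMulVec_self v) ?_
  rw [matDeg_le_iff]
  intro i j
  refine (totalDegree_mul _ _).trans ?_
  have := hv i
  have := hv j
  lia

/-- A fixed certificate has bounded degrees. -/
theorem exists_forall_hasCert (ν : Measure (Fin m → ℝ))
    (G : Matrix (Fin q) (Fin q) (MvPolynomial (Fin n ⊕ Fin m) ℝ))
    {S0 : Matrix (Fin p) (Fin p) (MvPolynomial (Fin n) ℝ)} (hS0 : IsSOSMatrix S0)
    {Sg : Matrix (Fin p × Fin q) (Fin p × Fin q) (MvPolynomial (Fin n ⊕ Fin m) ℝ)}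
    (hSg : IsSOSMatrix Sg) :
    ∃ N, ∀ d ≥ N, ∀ k ≥ N, HasCert ν G d k (S0 + (lram Sg G).map (integY ν)) := by
  refine ⟨matDeg S0 + matDegX Sg + matDegY Sg + 2 * ((matDegX G + 1) / 2), fun d hd k hk =>
    ⟨S0, Sg, hS0, ?_, hSg, ?_, ?_, rfl⟩⟩ <;> lia

end Cert

section Cone

variable {E : Type*} [AddCommGroup E] [Module ℝ E]

/-- A sequence which is concave with respect to a cone and whose end points lie in the cone
lies in the cone. -/
theorem PointedCone.mem_of_concave (K : PointedCone ℝ E) (b : ℕ → E) {c : ℕ}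
    (hconc : ∀ s, s + 1 < c → (2 : ℝ) • b (s + 1) - b s - b (s + 2) ∈ K)
    (h0 : b 0 ∈ K) (hc : b c ∈ K) {s : ℕ} (hs : s ≤ c) : b s ∈ K := by
  rcases Nat.eq_zero_or_pos c with rfl | hcpos
  · rwa [Nat.le_zero.1 hs]
  set D : ℕ → E := fun u => b (u + 1) - b u with hD
  have hmono : ∀ u t, u ≤ t → t < c → D u - D t ∈ K := by
    intro u t hut
    induction t, hut using Nat.le_induction with
    | base => intro _; simp
    | succ t _ ih =>
      intro htc
      have h1 := K.add_mem (ih (by lia)) (hconc t htc)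
      convert h1 using 1
      simp only [hD]
      module
  have hsum : ∑ u ∈ range s, ∑ t ∈ Ico s c, (D u - D t) ∈ K := by
    refine K.sum_mem fun u hu => K.sum_mem fun t ht => ?_
    rw [Finset.mem_range] at hu
    rw [Finset.mem_Ico] at ht
    exact hmono u t (by lia) ht.2
  have heq : ∑ u ∈ range s, ∑ t ∈ Ico s c, (D u - D t) =
      ((c : ℝ) - s) • (b s - b 0) - (s : ℝ) • (b c - b s) := by
    simp only [Finset.sum_sub_distrib, Finset.sum_const, Finset.card_range, Nat.card_Ico,
      ← Finset.smul_sum]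
    rw [Finset.sum_range_sub, Finset.sum_Ico_sub _ hs, ← Nat.cast_smul_eq_nsmul ℝ,
      ← Nat.cast_smul_eq_nsmul ℝ, Nat.cast_sub hs]
  have hcs : (0 : ℝ) ≤ c - s := by
    rw [sub_nonneg]
    exact_mod_cast hs
  have hcR : (0 : ℝ) < c := by exact_mod_cast hcpos
  have hmem := K.add_mem (K.add_mem hsum (K.smul_mem hcs h0))
    (K.smul_mem (Nat.cast_nonneg s) hc)
  have hfin := K.smul_mem (inv_nonneg.2 hcR.le) hmem
  convert hfin using 1
  rw [heq]
  have : (c : ℝ)⁻¹ • ((c : ℝ) • b s) = b s := by rw [smul_smul, inv_mul_cancel₀ hcR.ne', one_smul]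
  rw [eq_comm, ← this]
  congr 1
  rw [this]
  module

/-- The elements which are bounded above and below by multiples of `u` in the order of `K`. -/
def PointedCone.boundedBy (K : PointedCone ℝ E) (u : E) : Submodule ℝ E where
  carrier := {v | (∃ r : ℝ, r • u + v ∈ K) ∧ ∃ r : ℝ, r • u - v ∈ K}
  zero_mem' := ⟨⟨0, by simp⟩, ⟨0, by simp⟩⟩
  add_mem' := by
    rintro v w ⟨⟨r, hr⟩, ⟨s, hs⟩⟩ ⟨⟨r', hr'⟩, ⟨s', hs'⟩⟩
    refine ⟨⟨r + r', ?_⟩, ⟨s + s', ?_⟩⟩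
    · convert K.add_mem hr hr' using 1
      module
    · convert K.add_mem hs hs' using 1
      module
  smul_mem' := by
    rintro a v ⟨⟨r, hr⟩, ⟨s, hs⟩⟩
    rcases le_total 0 a with ha | ha
    · refine ⟨⟨a * r, ?_⟩, ⟨a * s, ?_⟩⟩
      · convert K.smul_mem ha hr using 1
        module
      · convert K.smul_mem ha hs using 1
        module
    · refine ⟨⟨-a * s, ?_⟩, ⟨-a * r, ?_⟩⟩
      · convert K.smul_mem (neg_nonneg.2 ha) hs using 1
        module
      · convert K.smul_mem (neg_nonneg.2 ha) hr using 1
        module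

theorem PointedCone.exists_functional (K : PointedCone ℝ E) {u h : E} (hu : u ∈ K)
    (hh : h ∈ K.boundedBy u) (hhK : h ∉ K) :
    ∃ g : E →ₗ[ℝ] ℝ, (∀ v ∈ K, v ∈ K.boundedBy u → 0 ≤ g v) ∧ g u = 1 ∧ g h ≤ 0 := by
  have huU : u ∈ K.boundedBy u := ⟨⟨0, by simpa using hu⟩, ⟨1, by simp⟩⟩
  set U := K.boundedBy u with hU
  have hneg : -u ∉ K := by
    intro hnu
    obtain ⟨r, hr⟩ := hh.1
    refine hhK ?_
    rcases le_total 0 r with h0 | h0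
    · convert K.add_mem hr (K.smul_mem h0 hnu) using 1
      module
    · convert K.add_mem hr (K.smul_mem (neg_nonneg.2 h0) hu) using 1
      module
  have hu0 : (⟨u, huU⟩ : U) ≠ 0 := by
    intro h0
    have h0' : u = 0 := congrArg Subtype.val h0
    exact hneg (by simp [h0'])
  let K' : PointedCone ℝ U :=
    { carrier := {v | ∃ c ∈ K, ∃ s : ℝ, 0 ≤ s ∧ (v : E) = c - s • h}
      zero_mem' := ⟨0, K.zero_mem, 0, le_rfl, by simp⟩
      add_mem' := by
        rintro v w ⟨c, hc, s, hs, hv⟩ ⟨c', hc', s', hs', hw⟩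
        refine ⟨c + c', K.add_mem hc hc', s + s', add_nonneg hs hs', ?_⟩
        rw [Submodule.coe_add, hv, hw]
        module
      smul_mem' := by
        rintro ⟨a, ha⟩ v ⟨c, hc, s, hs, hv⟩
        refine ⟨a • c, K.smul_mem ha hc, a * s, mul_nonneg ha hs, ?_⟩
        change a • (v : E) = _
        rw [hv]
        module }
  let f₀ : U →ₗ.[ℝ] ℝ := LinearPMap.mkSpanSingleton (⟨u, huU⟩ : U) (1 : ℝ) hu0
  have hnonneg : ∀ x : f₀.domain, (x : U) ∈ K' → 0 ≤ f₀ x := by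
    rintro ⟨x, hx⟩ hxK
    obtain ⟨r, rfl⟩ := Submodule.mem_span_singleton.1 hx
    have hval : f₀ ⟨r • (⟨u, huU⟩ : U), hx⟩ = r := by
      have := LinearPMap.mkSpanSingleton'_apply (⟨u, huU⟩ : U) (1 : ℝ)
        (fun c hc => by simpa using (smul_eq_zero.1 hc).resolve_right hu0) r hx
      exact this.trans (by simp)
    rw [hval]
    by_contra! hr
    obtain ⟨c, hc, s, hs, hv⟩ := hxK
    have hv' : r • u = c - s • h := hv
    rcases hs.eq_or_lt with rfl | hs
    · refine hneg ?_
      have h1 : c = r • u := by simpa using hv'.symm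
      have := K.smul_mem (inv_nonneg.2 (neg_nonneg.2 hr.le)) hc
      rwa [h1, smul_smul, inv_neg, neg_mul, inv_mul_cancel₀ hr.ne, neg_one_smul] at this
    · refine hhK ?_
      have h1 : s • h = c + (-r) • u := by
        rw [neg_smul, hv']
        abel
      have := K.smul_mem (inv_nonneg.2 hs.le)
        (K.add_mem hc (K.smul_mem (neg_nonneg.2 hr.le) hu))
      rwa [← h1, smul_smul, inv_mul_cancel₀ hs.ne', one_smul] at this
  have hdense : ∀ y : U, ∃ x : f₀.domain, (x : U) + y ∈ K' := by
    rintro ⟨y, hy⟩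
    obtain ⟨r, hr⟩ := hy.1
    exact ⟨⟨r • ⟨u, huU⟩, Submodule.smul_mem _ _ (Submodule.mem_span_singleton_self _)⟩,
      r • u + y, hr, 0, le_rfl, by simp⟩
  obtain ⟨g, hg1, hg2⟩ := riesz_extension K' f₀ hnonneg hdense
  obtain ⟨g', hg'⟩ := LinearMap.exists_extend g
  have hgg : ∀ v : U, g' v = g v := fun v => LinearMap.congr_fun hg' v
  refine ⟨g', fun v hv hvU => ?_, ?_, ?_⟩
  · rw [hgg ⟨v, hvU⟩]
    exact hg2 _ ⟨v, hv, 0, le_rfl, by simp⟩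
  · rw [hgg ⟨u, huU⟩]
    have := hg1 ⟨⟨u, huU⟩, Submodule.mem_span_singleton_self _⟩
    rw [this]
    exact LinearPMap.mkSpanSingleton_apply ℝ ℝ hu0 (1 : ℝ)
  · have := hg2 (-⟨h, hh⟩) ⟨0, K.zero_mem, 1, zero_le_one, by simp⟩
    rw [map_neg, ← hgg] at this
    linarith

end Cone

/-- The perturbation polynomial `1 + ∑ xᵢ^{2d}`. -/
noncomputable def perturb (n d : ℕ) : MvPolynomial (Fin n) ℝ := 1 + ∑ i, X i ^ (2 * d)

theorem monomial_mul_monomial_one {σ : Type*} (α β : σ →₀ ℕ) :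
    (monomial α (1 : ℝ)) * monomial β 1 = monomial (α + β) 1 := by
  rw [monomial_mul, one_mul]

theorem totalDegree_monomial_one_le {σ : Type*} {α : σ →₀ ℕ} {d : ℕ} (h : α.degree ≤ d) :
    (monomial α (1 : ℝ)).totalDegree ≤ d := by
  rw [totalDegree_monomial _ one_ne_zero]
  exact h

/-- Modulo squares of polynomials of degree at most `d`, each even monomial of degree at most `2d`
is bounded by `1 + ∑ xᵢ^{2d}`. -/
theorem perturb_sub_monomial_mem {n d : ℕ} (K : PointedCone ℝ (MvPolynomial (Fin n) ℝ))
    (hK : ∀ t : MvPolynomial (Fin n) ℝ, t.totalDegree ≤ d → t * t ∈ K)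
    (α : Fin n →₀ ℕ) (hα : α.degree ≤ d) : perturb n d - monomial (α + α) 1 ∈ K := by
  have hsq : ∀ β γ : Fin n →₀ ℕ, β.degree ≤ d → γ.degree ≤ d →
      monomial (β + β) 1 + monomial (γ + γ) 1 - (2 : ℝ) • monomial (β + γ) (1 : ℝ) ∈ K := by
    intro β γ hβ hγ
    convert hK (monomial β 1 - monomial γ 1) ((totalDegree_sub _ _).trans
      (max_le (totalDegree_monomial_one_le hβ) (totalDegree_monomial_one_le hγ))) using 1
    rw [← monomial_mul_monomial_one β β, ← monomial_mul_monomial_one γ γ,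
      ← monomial_mul_monomial_one β γ, two_smul]
    ring
  have hone : (1 : MvPolynomial (Fin n) ℝ) ∈ K := by simpa using hK 1 (by simp)
  have hX : ∀ i : Fin n, (X i ^ (2 * d) : MvPolynomial (Fin n) ℝ) ∈ K := by
    intro i
    have := hK (X i ^ d) (by simp)
    rwa [← pow_add, ← two_mul] at this
  have hzero : perturb n d - monomial (0 + 0) 1 ∈ K := by
    have : perturb n d - monomial (0 + 0) 1 = ∑ i, X i ^ (2 * d) := by
      simp [perturb]
    rw [this]
    exact K.sum_mem fun i _ => hX i
  induction hN : α.support.card using Nat.strong_induction_on generalizing α with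
  | _ N ih =>
  subst hN
  rcases Finset.eq_empty_or_nonempty α.support with h0 | ⟨i, hi⟩
  · rw [Finsupp.support_eq_empty.1 h0]
    exact hzero
  by_cases hex : ∃ j ∈ α.support, j ≠ i
  · obtain ⟨j, hj, hji⟩ := hex
    set β := (α.erase i).erase j with hβ
    set c := α i + α j with hc
    let l : ℕ → (Fin n →₀ ℕ) := fun s => β + Finsupp.single i s + Finsupp.single j (c - s)
    have hl : α = l (α i) := by
      have h1 : c - α i = α j := by lia
      simp only [l, h1, hβ]
      ext k
      rcases eq_or_ne k i with rfl | hki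
      · simp [hji.symm]
      · rcases eq_or_ne k j with rfl | hkj
        · simp [hki]
        · simp [hki, hkj, Finsupp.erase_ne]
    have hldeg : ∀ s ≤ c, (l s).degree = α.degree := by
      intro s hs
      rw [hl]
      simp only [l, map_add, Finsupp.degree_single]
      lia
    have hsupp : β.support = (α.support.erase i).erase j := by
      simp [hβ, Finsupp.support_erase]
    have hcard : β.support.card + 2 = α.support.card := by
      have h1 := Finset.card_erase_add_one hi
      have h2 := Finset.card_erase_add_one (Finset.mem_erase.2 ⟨hji, hj⟩)
      rw [hsupp]
      lia
    have hlt : ∀ k s, (β + Finsupp.single k s).support.card < α.support.card := by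
      intro k s
      have h1 := Finset.card_le_card (Finsupp.support_add (g₁ := β) (g₂ := Finsupp.single k s))
      have h2 := Finset.card_union_le β.support (Finsupp.single k s).support
      have h3 : (Finsupp.single k s).support.card ≤ 1 :=
        (Finset.card_le_card Finsupp.support_single_subset).trans (by simp)
      lia
    rw [hl]
    refine K.mem_of_concave (fun s => perturb n d - monomial (l s + l s) 1) (c := c)
      (fun s hs => ?_) ?_ ?_ (by lia)
    · convert hsq (l s) (l (s + 2)) (by rw [hldeg _ (by lia)]; exact hα)
        (by rw [hldeg _ (by lia)]; exact hα) using 1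
      have : l s + l (s + 2) = l (s + 1) + l (s + 1) := by
        simp only [l]
        ext k
        simp only [Finsupp.add_apply, Finsupp.single_apply]
        split_ifs <;> lia
      rw [this]
      module
    · refine ih _ ?_ (l 0) ((hldeg 0 (by lia)).trans_le hα) rfl
      simpa [l] using hlt j c
    · refine ih _ ?_ (l c) ((hldeg c le_rfl).trans_le hα) rfl
      simpa [l] using hlt i c
  · push Not at hex
    have hl : α = Finsupp.single i (α i) := by
      ext k
      rcases eq_or_ne k i with rfl | hki
      · simp
      · have : k ∉ α.support := fun hk => hki (hex k hk)
        simpa [hki, hki.symm] using this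
    rw [hl, Finsupp.degree_single] at hα
    rw [hl]
    refine K.mem_of_concave
      (fun s => perturb n d - monomial (Finsupp.single i s + Finsupp.single i s) 1) (c := d)
      (fun s hs => ?_) ?_ ?_ hα
    · convert hsq (Finsupp.single i s) (Finsupp.single i (s + 2)) (by simp; lia) (by simp; lia)
        using 1
      have : Finsupp.single i s + Finsupp.single i (s + 2) =
          Finsupp.single i (s + 1) + Finsupp.single i (s + 1) := by
        simp only [← Finsupp.single_add]
        congr 1
        ring
      rw [this]
      module
    · simpa using hzero
    · have : perturb n d - monomial (Finsupp.single i d + Finsupp.single i d) 1 =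
          1 + ∑ j ∈ Finset.univ.erase i, X j ^ (2 * d) := by
        rw [perturb, ← Finset.add_sum_erase _ _ (Finset.mem_univ i), X_pow_eq_monomial,
          ← Finsupp.single_add, two_mul]
        ring
      rw [this]
      exact K.add_mem hone (K.sum_mem fun j _ => hX j)

section OrderUnit

variable {n p d : ℕ} {K : PointedCone ℝ (Matrix (Fin p) (Fin p) (MvPolynomial (Fin n) ℝ))}

theorem vecMulVec_piSingle {R ι : Type*} [Semiring R] [DecidableEq ι] (a b : ι) (s t : R) :
    vecMulVec (Pi.single a s) (Pi.single b t) = Matrix.single a b (s * t) := by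
  ext1 i j
  simp only [vecMulVec_apply, Matrix.single_apply, Pi.single_apply, @eq_comm _ a i, @eq_comm _ b j]
  by_cases h1 : i = a <;> by_cases h2 : j = b <;> simp [h1, h2]

theorem totalDegree_piSingle_le {t : MvPolynomial (Fin n) ℝ} (ht : t.totalDegree ≤ d)
    (a b : Fin p) : ((Pi.single a t : Fin p → MvPolynomial (Fin n) ℝ) b).totalDegree ≤ d := by
  rw [Pi.single_apply]
  split_ifs <;> simp [ht]

theorem single_perturb_sub_mem
    (hK : ∀ v : Fin p → MvPolynomial (Fin n) ℝ, (∀ a, (v a).totalDegree ≤ d) → vecMulVec v v ∈ K)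
    (a : Fin p) (α : Fin n →₀ ℕ) (hα : α.degree ≤ d) :
    Matrix.single a a (perturb n d - monomial (α + α) 1) ∈ K := by
  refine perturb_sub_monomial_mem
    (K.comap (Matrix.singleLinearMap ℝ a a : MvPolynomial (Fin n) ℝ →ₗ[ℝ] _)) (fun t ht => ?_) α hα
  have := hK (Pi.single a t) (totalDegree_piSingle_le ht a)
  rw [vecMulVec_piSingle] at this
  exact this

theorem single_perturb_mem
    (hK : ∀ v : Fin p → MvPolynomial (Fin n) ℝ, (∀ a, (v a).totalDegree ≤ d) → vecMulVec v v ∈ K)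
    (a : Fin p) : Matrix.single a a (perturb n d) ∈ K := by
  have h1 := single_perturb_sub_mem hK a 0 (by simp)
  have h2 := hK (Pi.single a 1) (totalDegree_piSingle_le (by simp) a)
  rw [vecMulVec_piSingle] at h2
  convert K.add_mem h1 h2 using 1
  rw [← Matrix.single_add]
  simp

theorem perturb_smul_one_eq_sum :
    perturb n d • (1 : Matrix (Fin p) (Fin p) (MvPolynomial (Fin n) ℝ)) =
      ∑ a, Matrix.single a a (perturb n d) := by
  rw [Matrix.smul_one_eq_diagonal]
  ext1 i j
  simp [Matrix.sum_apply, Matrix.single_apply, Matrix.diagonal_apply, ite_and]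

theorem perturb_smul_one_mem
    (hK : ∀ v : Fin p → MvPolynomial (Fin n) ℝ, (∀ a, (v a).totalDegree ≤ d) → vecMulVec v v ∈ K) :
    perturb n d • (1 : Matrix (Fin p) (Fin p) (MvPolynomial (Fin n) ℝ)) ∈ K := by
  rw [perturb_smul_one_eq_sum]
  exact K.sum_mem fun a _ => single_perturb_mem hK a

/-- The symmetrized monomial matrix units are bounded by the perturbation. -/
theorem two_perturb_add_monomial_mem
    (hK : ∀ v : Fin p → MvPolynomial (Fin n) ℝ, (∀ a, (v a).totalDegree ≤ d) → vecMulVec v v ∈ K)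
    (a b : Fin p) (γ : Fin n →₀ ℕ) (hγ : γ.degree ≤ 2 * d) (e : ℝ) (he : e * e = 1) :
    (2 : ℝ) • (perturb n d • (1 : Matrix (Fin p) (Fin p) (MvPolynomial (Fin n) ℝ))) +
      e • (Matrix.single a b (monomial γ 1) + Matrix.single b a (monomial γ 1)) ∈ K := by
  obtain ⟨α, β, hαβ, hα, hβ⟩ : ∃ α β : Fin n →₀ ℕ, α + β = γ ∧ α.degree ≤ d ∧ β.degree ≤ d := by
    rcases le_total γ.degree d with h | h
    · exact ⟨γ, 0, by simp, h, by simp⟩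
    · obtain ⟨α, hα, hdeg⟩ := Finsupp.exists_le_degree_eq γ d h
      have hadd : α + (γ - α) = γ := add_tsub_cancel_of_le hα
      refine ⟨α, γ - α, hadd, hdeg.le, ?_⟩
      have := congrArg Finsupp.degree hadd
      rw [map_add] at this
      lia
  have hrest : ∀ c : Fin p, perturb n d • (1 : Matrix (Fin p) (Fin p) (MvPolynomial (Fin n) ℝ)) -
      Matrix.single c c (perturb n d) ∈ K := by
    intro c
    rw [perturb_smul_one_eq_sum, ← Finset.add_sum_erase _ _ (Finset.mem_univ c),
      add_sub_cancel_left]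
    exact K.sum_mem fun a _ => single_perturb_mem hK a
  have hv := hK (Pi.single a (monomial α 1) + Pi.single b (e • monomial β 1)) (fun c => by
    refine (totalDegree_add _ _).trans (max_le ?_ ?_)
    · exact totalDegree_piSingle_le (totalDegree_monomial_one_le hα) _ _
    · exact totalDegree_piSingle_le
        ((totalDegree_smul_le _ _).trans (totalDegree_monomial_one_le hβ)) _ _)
  have hsum := K.add_mem (K.add_mem (K.add_mem (hrest a) (hrest b))
    (K.add_mem (single_perturb_sub_mem hK a α hα) (single_perturb_sub_mem hK b β hβ))) hv
  convert hsum using 1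
  have hvv : vecMulVec (Pi.single a (monomial α (1 : ℝ)) + Pi.single b (e • monomial β (1 : ℝ)))
      (Pi.single a (monomial α (1 : ℝ)) + Pi.single b (e • monomial β (1 : ℝ))) =
      Matrix.single a a (monomial (α + α) (1 : ℝ)) + Matrix.single b b (monomial (β + β) (1 : ℝ)) +
      e • (Matrix.single a b (monomial γ 1) + Matrix.single b a (monomial γ 1)) := by
    simp only [vecMulVec_add, add_vecMulVec, vecMulVec_piSingle, smul_mul_assoc, mul_smul_comm,
      smul_smul, he, one_smul, monomial_mul_monomial_one, ← Matrix.smul_single, ← hαβ,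
      add_comm β α, smul_add]
    abel
  rw [hvv]
  simp only [← Matrix.singleAddMonoidHom_apply, map_sub]
  generalize perturb n d • (1 : Matrix (Fin p) (Fin p) (MvPolynomial (Fin n) ℝ)) = M
  module

theorem single_add_single_mem_boundedBy_perturb
    (hK : ∀ v : Fin p → MvPolynomial (Fin n) ℝ, (∀ a, (v a).totalDegree ≤ d) → vecMulVec v v ∈ K)
    (a b : Fin p) (γ : Fin n →₀ ℕ) (hγ : γ.degree ≤ 2 * d) :
    Matrix.single a b (monomial γ 1) + Matrix.single b a (monomial γ 1) ∈
      K.boundedBy (perturb n d • (1 : Matrix (Fin p) (Fin p) (MvPolynomial (Fin n) ℝ))) := by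
  refine ⟨⟨2, ?_⟩, ⟨2, ?_⟩⟩
  · have := two_perturb_add_monomial_mem hK a b γ hγ 1 (by norm_num)
    rwa [one_smul] at this
  · have := two_perturb_add_monomial_mem hK a b γ hγ (-1) (by norm_num)
    rwa [neg_one_smul, ← sub_eq_add_neg] at this

theorem matrix_eq_sum_monomial (H : Matrix (Fin p) (Fin p) (MvPolynomial (Fin n) ℝ)) :
    H = ∑ a, ∑ b, ∑ γ ∈ (H a b).support,
      (H a b).coeff γ • Matrix.single a b (monomial γ (1 : ℝ)) := by
  have hexp : ∀ a b, Matrix.single a b (H a b) = ∑ γ ∈ (H a b).support,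
      (H a b).coeff γ • Matrix.single a b (monomial γ (1 : ℝ)) := by
    intro a b
    conv_lhs => rw [← support_sum_monomial_coeff (H a b)]
    rw [← Matrix.singleAddMonoidHom_apply, map_sum]
    refine Finset.sum_congr rfl fun γ _ => ?_
    simp [Matrix.smul_single, smul_monomial]
  conv_lhs => rw [Matrix.matrix_eq_sum_single H]
  simp only [hexp]

/-- Every symmetric matrix of degree at most `2d` is bounded by the perturbation. -/
theorem isSymm_mem_boundedBy_perturb
    (hK : ∀ v : Fin p → MvPolynomial (Fin n) ℝ, (∀ a, (v a).totalDegree ≤ d) → vecMulVec v v ∈ K)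
    {H : Matrix (Fin p) (Fin p) (MvPolynomial (Fin n) ℝ)} (hH : H.IsSymm)
    (hdeg : ∀ a b, (H a b).totalDegree ≤ 2 * d) :
    H ∈ K.boundedBy (perturb n d • (1 : Matrix (Fin p) (Fin p) (MvPolynomial (Fin n) ℝ))) := by
  have hsum : H + Hᵀ = ∑ a, ∑ b, ∑ γ ∈ (H a b).support, (H a b).coeff γ •
      (Matrix.single a b (monomial γ (1 : ℝ)) + Matrix.single b a (monomial γ 1)) := by
    conv_lhs => rw [matrix_eq_sum_monomial H]
    simp only [Matrix.transpose_sum, ← Finset.sum_add_distrib, Matrix.transpose_smul,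
      Matrix.transpose_single, smul_add]
  have h2 : H = (1 / 2 : ℝ) • (H + Hᵀ) := by
    rw [hH.eq]
    module
  rw [h2, hsum]
  refine Submodule.smul_mem _ _ (Submodule.sum_mem _ fun a _ => Submodule.sum_mem _ fun b _ =>
    Submodule.sum_mem _ fun γ hγ => Submodule.smul_mem _ _
      (single_add_single_mem_boundedBy_perturb hK a b γ ?_))
  exact (le_totalDegree hγ).trans (hdeg a b)

end OrderUnit

section Functional

variable {n m p q : ℕ} {ν : Measure (Fin m → ℝ)}
  {G : Matrix (Fin q) (Fin q) (MvPolynomial (Fin n ⊕ Fin m) ℝ)}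
  {F : Matrix (Fin p) (Fin p) (MvPolynomial (Fin n) ℝ)}

/-- A separating functional for the truncated certificates. -/
theorem exists_functional_of_not_hasCert (hmom : momentsFinite ν) {d k : ℕ} (hF : F.IsSymm)
    (hFd : ∀ a b, (F a b).totalDegree ≤ 2 * d) {ε : ℝ}
    (hcert : ¬ HasCert ν G d k
      (F + (C ε * perturb n d) • (1 : Matrix (Fin p) (Fin p) (MvPolynomial (Fin n) ℝ)))) :
    ∃ L : Matrix (Fin p) (Fin p) (MvPolynomial (Fin n) ℝ) →ₗ[ℝ] ℝ,
      (∀ H, L Hᵀ = L H) ∧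
      (∀ H : Matrix (Fin p) (Fin p) (MvPolynomial (Fin n) ℝ), H.IsSymm →
        (∀ a b, (H a b).totalDegree ≤ 2 * d) → HasCert ν G d k H → 0 ≤ L H) ∧
      (∀ a b (γ : Fin n →₀ ℕ), γ.degree ≤ 2 * d →
        L (Matrix.single a b (monomial γ 1)) ∈ Set.Icc (-1 : ℝ) 1) ∧
      L F ≤ -ε := by
  set u := perturb n d • (1 : Matrix (Fin p) (Fin p) (MvPolynomial (Fin n) ℝ)) with hu
  have hK := vecMulVec_mem_certCone (p := p) (d := d) (k := k) (G := G) hmom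
  have huK := perturb_smul_one_mem hK
  have hεu : (C ε * perturb n d) • (1 : Matrix (Fin p) (Fin p) (MvPolynomial (Fin n) ℝ)) =
      ε • u := by
    rw [hu, ← smul_assoc, smul_eq_C_mul]
  have huU : u ∈ (certCone p hmom G d k).boundedBy u :=
    ⟨⟨0, by simpa using huK⟩, ⟨1, by simp⟩⟩
  rw [hεu] at hcert
  obtain ⟨g, hg, hgu, hgh⟩ := (certCone p hmom G d k).exists_functional huK
    (Submodule.add_mem _ (isSymm_mem_boundedBy_perturb hK hF hFd)
      (Submodule.smul_mem _ ε huU)) hcert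
  rw [← hu] at hgu
  obtain ⟨L, hL⟩ : ∃ L : Matrix (Fin p) (Fin p) (MvPolynomial (Fin n) ℝ) →ₗ[ℝ] ℝ,
      ∀ H, L H = (1 / 2) * (g H + g Hᵀ) :=
    ⟨(1 / 2 : ℝ) • (g + g ∘ₗ (Matrix.transposeLinearEquiv (Fin p) (Fin p) ℝ _).toLinearMap),
      fun H => rfl⟩
  have hsymm : ∀ H : Matrix (Fin p) (Fin p) (MvPolynomial (Fin n) ℝ), H.IsSymm → L H = g H := by
    intro H hH
    rw [hL, hH.eq]
    ring
  refine ⟨L, fun H => ?_, fun H hH hHd hHc => ?_, fun a b γ hγ => ?_, ?_⟩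
  · rw [hL, hL, Matrix.transpose_transpose, add_comm]
  · rw [hsymm H hH]
    exact hg H hHc (isSymm_mem_boundedBy_perturb hK hH hHd)
  · have hU := single_add_single_mem_boundedBy_perturb hK a b γ hγ
    have h1 := hg _ (two_perturb_add_monomial_mem hK a b γ hγ 1 (by norm_num))
      (Submodule.add_mem _ (Submodule.smul_mem _ _ huU) (Submodule.smul_mem _ _ hU))
    have h2 := hg _ (two_perturb_add_monomial_mem hK a b γ hγ (-1) (by norm_num))
      (Submodule.add_mem _ (Submodule.smul_mem _ _ huU) (Submodule.smul_mem _ _ hU))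
    simp only [← hu, map_add, map_smul, hgu, smul_eq_mul] at h1 h2
    rw [hL, Matrix.transpose_single]
    constructor <;> linarith
  · rw [hsymm F hF]
    rw [map_add, map_smul, hgu, smul_eq_mul] at hgh
    linarith

/-- If the certificates fail for arbitrarily large degrees, there is a functional on all
polynomial matrices separating `F` from the certificates. -/
theorem exists_functional_of_forall_not_hasCert (hmom : momentsFinite ν) (hG : G.IsSymm)
    (hF : F.IsSymm) {ε : ℝ}
    (hcert : ∀ N : ℕ, ∃ d ≥ N, ∃ k ≥ N, ¬ HasCert ν G d k
      (F + (C ε * perturb n d) • (1 : Matrix (Fin p) (Fin p) (MvPolynomial (Fin n) ℝ)))) :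
    ∃ L : Matrix (Fin p) (Fin p) (MvPolynomial (Fin n) ℝ) →ₗ[ℝ] ℝ,
      (∀ H, L Hᵀ = L H) ∧
      (∀ S0 Sg, IsSOSMatrix S0 → IsSOSMatrix Sg → 0 ≤ L (S0 + (lram Sg G).map (integY ν))) ∧
      (∀ a b (γ : Fin n →₀ ℕ), |L (Matrix.single a b (monomial γ 1))| ≤ 1) ∧
      L F ≤ -ε := by
  choose d hd k hk hdk using fun j => hcert (j + matDeg F)
  have hdeg : ∀ H : Matrix (Fin p) (Fin p) (MvPolynomial (Fin n) ℝ), ∀ j ≥ matDeg H, ∀ a b,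
      (H a b).totalDegree ≤ 2 * d j := by
    intro H j hj
    refine matDeg_le_iff.1 ?_
    have := hd j
    lia
  choose L hLsymm hLpos hLmon hLF using fun j => exists_functional_of_not_hasCert hmom hF
    (matDeg_le_iff.1 (by have := hd j; lia)) (hdk j)
  set l : Filter ℕ := (Filter.hyperfilter ℕ : Filter ℕ) with hl
  have hle : l ≤ Filter.atTop := by
    rw [← Nat.cofinite_eq_atTop]
    exact Filter.hyperfilter_le_cofinite
  have hmon : ∀ a b (γ : Fin n →₀ ℕ), ∃ r ∈ Set.Icc (-1 : ℝ) 1,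
      Filter.Tendsto (fun j => L j (Matrix.single a b (monomial γ 1))) l (nhds r) := by
    intro a b γ
    have hev : ∀ᶠ j in l, L j (Matrix.single a b (monomial γ 1)) ∈ Set.Icc (-1 : ℝ) 1 := by
      refine hle (Filter.eventually_atTop.2 ⟨γ.degree, fun j hj => hLmon j a b γ ?_⟩)
      have := hd j
      lia
    obtain ⟨r, hr, hlr⟩ := (isCompact_Icc (a := (-1 : ℝ)) (b := 1)).ultrafilter_le_nhds
      ((Filter.hyperfilter ℕ).map fun j => L j (Matrix.single a b (monomial γ 1)))
      (Filter.le_principal_iff.2 hev)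
    exact ⟨r, hr, hlr⟩
  have hlim : ∀ H, ∃ r, Filter.Tendsto (fun j => L j H) l (nhds r) := by
    intro H
    choose r _ hr using hmon
    refine ⟨∑ a, ∑ b, ∑ γ ∈ (H a b).support, (H a b).coeff γ * r a b γ, ?_⟩
    have heq : ∀ j, L j H = ∑ a, ∑ b, ∑ γ ∈ (H a b).support,
        (H a b).coeff γ * L j (Matrix.single a b (monomial γ 1)) := by
      intro j
      conv_lhs => rw [matrix_eq_sum_monomial H]
      simp only [map_sum, map_smul, smul_eq_mul]
    simp_rw [heq]
    exact tendsto_finsetSum _ fun a _ => tendsto_finsetSum _ fun b _ =>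
      tendsto_finsetSum _ fun γ _ => (hr a b γ).const_mul _
  choose M hM using hlim
  refine ⟨⟨⟨M, fun H H' => ?_⟩, fun a H => ?_⟩, fun H => ?_, fun S0 Sg hS0 hSg => ?_,
    fun a b γ => ?_, ?_⟩
  · refine tendsto_nhds_unique (hM _) ?_
    simpa using (hM H).add (hM H')
  · refine tendsto_nhds_unique (hM _) ?_
    simpa using (hM H).const_mul a
  · refine tendsto_nhds_unique (hM _) ?_
    simpa [hLsymm] using hM H
  · refine ge_of_tendsto (hM _) (hle ?_)
    obtain ⟨N, hN⟩ := exists_forall_hasCert ν G hS0 hSg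
    refine Filter.eventually_atTop.2 ⟨N + matDeg (S0 + (lram Sg G).map (integY ν)), fun j hj =>
      hLpos j _ ?_ (hdeg _ j (by lia)) (hN _ ?_ _ ?_)⟩
    · exact hS0.isSymm.add ((lram_isSymm hSg.isSymm hG).map _)
    · have := hd j
      lia
    · have := hk j
      lia
  · obtain ⟨r, hr, hr'⟩ := hmon a b γ
    have : M (Matrix.single a b (monomial γ 1)) = r := tendsto_nhds_unique (hM _) hr'
    refine abs_le.2 ?_
    change M _ ∈ Set.Icc (-1 : ℝ) 1
    rwa [this]
  · exact le_of_tendsto (hM F) (Filter.Eventually.of_forall hLF)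

end Functional

/-- The monoid generated by the polynomials `1 ± xᵢ`. -/
noncomputable def boxMonoid (n : ℕ) : Submonoid (MvPolynomial (Fin n) ℝ) :=
  Submonoid.closure (Set.range (fun i => 1 + X i) ∪ Set.range (fun i => 1 - X i))

theorem one_add_X_mem_boxMonoid {n : ℕ} (i : Fin n) : 1 + X i ∈ boxMonoid n :=
  Submonoid.subset_closure (Or.inl ⟨i, rfl⟩)

theorem one_sub_X_mem_boxMonoid {n : ℕ} (i : Fin n) : 1 - X i ∈ boxMonoid n :=
  Submonoid.subset_closure (Or.inr ⟨i, rfl⟩)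

theorem le_of_convex_of_bounded {b : ℕ → ℝ} {B : ℝ}
    (hconv : ∀ r, 0 ≤ b r - 2 * b (r + 1) + b (r + 2)) (hB : ∀ r, b r ≤ B) : b 1 ≤ b 0 := by
  by_contra! h
  have hstep : ∀ r, b 1 - b 0 ≤ b (r + 1) - b r := by
    intro r
    induction r with
    | zero => exact le_rfl
    | succ r ih =>
      have := hconv r
      rw [show r + 1 + 1 = r + 2 from rfl]
      linarith
  have hlin : ∀ r : ℕ, b 0 + r * (b 1 - b 0) ≤ b r := by
    intro r
    induction r with
    | zero => simp
    | succ r ih =>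
      have := hstep r
      push_cast
      linarith
  obtain ⟨r, hr⟩ := exists_nat_gt ((B - b 0) / (b 1 - b 0))
  rw [div_lt_iff₀ (by linarith)] at hr
  have := hlin r
  have := hB r
  linarith

/-- A functional which is nonnegative on squares and has bounded moments remains so after
multiplication by the elements of `boxMonoid`. -/
theorem nonneg_boxMonoid_mul_sq {n : ℕ} {w : MvPolynomial (Fin n) ℝ} (hw : w ∈ boxMonoid n)
    (l : MvPolynomial (Fin n) ℝ →ₗ[ℝ] ℝ) (hpos : ∀ t, 0 ≤ l (t * t))
    (hb : ∀ t, ∃ B, ∀ α, |l (monomial α 1 * t)| ≤ B) (t : MvPolynomial (Fin n) ℝ) :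
    0 ≤ l (w * (t * t)) := by
  have hbox : ∀ (l : MvPolynomial (Fin n) ℝ →ₗ[ℝ] ℝ), (∀ t, 0 ≤ l (t * t)) →
      (∀ t, ∃ B, ∀ α, |l (monomial α 1 * t)| ≤ B) → ∀ i t, 0 ≤ l ((1 - X i ^ 2) * (t * t)) := by
    intro l hpos hb i t
    obtain ⟨B, hB⟩ := hb (t * t)
    have h := le_of_convex_of_bounded (b := fun r => l (X i ^ (2 * r) * (t * t))) (B := B)
      (fun r => ?_) (fun r => ?_)
    · simp only [mul_zero, pow_zero, mul_one, one_mul] at h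
      rw [sub_mul, one_mul, map_sub]
      linarith
    · have h := hpos (X i ^ r * (1 - X i ^ 2) * t)
      have e : X i ^ r * (1 - X i ^ 2) * t * (X i ^ r * (1 - X i ^ 2) * t) =
          X i ^ (2 * r) * (t * t) - (2 : ℝ) • (X i ^ (2 * (r + 1)) * (t * t)) +
            X i ^ (2 * (r + 2)) * (t * t) := by
        rw [two_smul]
        ring
      rw [e, map_add, map_sub, map_smul, smul_eq_mul] at h
      exact h
    · have := (abs_le.1 (hB (Finsupp.single i (2 * r)))).2
      rwa [← X_pow_eq_monomial] at this
  induction hw using Submonoid.closure_induction generalizing l t with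
  | mem w hw =>
    have key : ∀ i (v : MvPolynomial (Fin n) ℝ), v * v + (1 - X i ^ 2) = (2 : ℝ) • v →
        0 ≤ l (v * (t * t)) := by
      intro i v hv
      have h1 := hpos (v * t)
      have h2 := hbox l hpos hb i t
      have h3 : v * t * (v * t) + (1 - X i ^ 2) * (t * t) = (2 : ℝ) • (v * (t * t)) := by
        rw [← smul_mul_assoc, ← hv]
        ring
      have h4 := congrArg l h3
      rw [map_add, map_smul, smul_eq_mul] at h4
      linarith
    rcases hw with ⟨i, rfl⟩ | ⟨i, rfl⟩
    · exact key i _ (by rw [two_smul]; ring)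
    · exact key i _ (by rw [two_smul]; ring)
  | one => simpa using hpos t
  | mul v w _ _ ihv ihw =>
    have h := ihw (l ∘ₗ LinearMap.mulLeft ℝ v) (fun t => ihv l hpos hb t) (fun t => ?_) t
    · simpa [mul_assoc] using h
    · obtain ⟨B, hB⟩ := hb (v * t)
      refine ⟨B, fun α => ?_⟩
      have := hB α
      rwa [mul_left_comm] at this

section BoxPositive

variable {n p : ℕ}

/-- The sum of the absolute values of the coefficients of a polynomial matrix. -/
noncomputable def coeffSum (H : Matrix (Fin p) (Fin p) (MvPolynomial (Fin n) ℝ)) : ℝ :=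
  ∑ a, ∑ b, ∑ γ ∈ (H a b).support, |(H a b).coeff γ|

theorem abs_le_coeffSum_mul {f : Matrix (Fin p) (Fin p) (MvPolynomial (Fin n) ℝ) →ₗ[ℝ] ℝ} {B : ℝ}
    (hf : ∀ a b γ, |f (Matrix.single a b (monomial γ 1))| ≤ B)
    (H : Matrix (Fin p) (Fin p) (MvPolynomial (Fin n) ℝ)) : |f H| ≤ coeffSum H * B := by
  conv_lhs => rw [matrix_eq_sum_monomial H]
  simp only [map_sum, map_smul, smul_eq_mul, coeffSum, Finset.sum_mul]
  refine (Finset.abs_sum_le_sum_abs _ _).trans (Finset.sum_le_sum fun a _ => ?_)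
  refine (Finset.abs_sum_le_sum_abs _ _).trans (Finset.sum_le_sum fun b _ => ?_)
  refine (Finset.abs_sum_le_sum_abs _ _).trans (Finset.sum_le_sum fun γ _ => ?_)
  rw [abs_mul]
  exact mul_le_mul_of_nonneg_left (hf a b γ) (abs_nonneg _)

theorem map_one_eq_sum_single (f : Matrix (Fin p) (Fin p) (MvPolynomial (Fin n) ℝ) →ₗ[ℝ] ℝ) :
    f 1 = ∑ b, f (Matrix.single b b 1) := by
  rw [← map_sum, Matrix.sum_single_one]

/-- A symmetric functional which is nonnegative on all products of elements of `P` with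
elements of `boxMonoid n`. -/
structure IsBoxPositive (P : Set (Matrix (Fin p) (Fin p) (MvPolynomial (Fin n) ℝ)))
    (f : Matrix (Fin p) (Fin p) (MvPolynomial (Fin n) ℝ) →ₗ[ℝ] ℝ) : Prop where
  transpose : ∀ H, f Hᵀ = f H
  nonneg : ∀ w ∈ boxMonoid n, ∀ H ∈ P, 0 ≤ f (w • H)

variable {P : Set (Matrix (Fin p) (Fin p) (MvPolynomial (Fin n) ℝ))}
  {f : Matrix (Fin p) (Fin p) (MvPolynomial (Fin n) ℝ) →ₗ[ℝ] ℝ}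

theorem isBoxPositive_of_bounded (hPsq : ∀ H ∈ P, ∀ t : MvPolynomial (Fin n) ℝ, (t * t) • H ∈ P)
    (hsymm : ∀ H, f Hᵀ = f H) (hpos : ∀ H ∈ P, 0 ≤ f H)
    (hb : ∀ a b γ, |f (Matrix.single a b (monomial γ 1))| ≤ 1) : IsBoxPositive P f := by
  refine ⟨hsymm, fun w hw H hH => ?_⟩
  have h := nonneg_boxMonoid_mul_sq hw
    (f ∘ₗ (LinearMap.toSpanSingleton (MvPolynomial (Fin n) ℝ) _ H).restrictScalars ℝ)
    (fun t => ?_) (fun t => ⟨coeffSum (t • H) * 1, fun α => ?_⟩) 1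
  · simpa using h
  · simpa using hpos _ (hPsq H hH t)
  · have h := abs_le_coeffSum_mul (B := 1)
      (f := f ∘ₗ DistribSMul.toLinearMap ℝ _ (monomial α (1 : ℝ))) (fun a b γ => ?_) (t • H)
    · simpa [smul_smul] using h
    · simpa [Matrix.smul_single, monomial_mul] using hb a b (α + γ)

namespace IsBoxPositive

theorem comp_smul (hf : IsBoxPositive P f) {w : MvPolynomial (Fin n) ℝ} (hw : w ∈ boxMonoid n) :
    IsBoxPositive P (f ∘ₗ DistribSMul.toLinearMap ℝ _ w) := by
  refine ⟨fun H => ?_, fun v hv H hH => ?_⟩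
  · simpa using hf.transpose (w • H)
  · simpa [smul_smul] using hf.nonneg (w * v) (mul_mem hw hv) H hH

theorem smul (hf : IsBoxPositive P f) {r : ℝ} (hr : 0 ≤ r) : IsBoxPositive P (r • f) :=
  ⟨fun H => by simp [hf.transpose], fun w hw H hH => by
    simpa using mul_nonneg hr (hf.nonneg w hw H hH)⟩

theorem add (hf : IsBoxPositive P f)
    {g : Matrix (Fin p) (Fin p) (MvPolynomial (Fin n) ℝ) →ₗ[ℝ] ℝ} (hg : IsBoxPositive P g) :
    IsBoxPositive P (f + g) :=
  ⟨fun H => by simp [hf.transpose, hg.transpose], fun w hw H hH => by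
    simpa using add_nonneg (hf.nonneg w hw H hH) (hg.nonneg w hw H hH)⟩

theorem nonneg_vecMulVec (hf : IsBoxPositive P f)
    (hPvec : ∀ v : Fin p → MvPolynomial (Fin n) ℝ, vecMulVec v v ∈ P)
    (v : Fin p → MvPolynomial (Fin n) ℝ) :
    0 ≤ f (vecMulVec v v) := by
  simpa using hf.nonneg 1 (one_mem _) _ (hPvec v)

theorem single_monomial_mul_le (hf : IsBoxPositive P f)
    (hPvec : ∀ v : Fin p → MvPolynomial (Fin n) ℝ, vecMulVec v v ∈ P) (a : Fin p) (α : Fin n →₀ ℕ)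
    (t : MvPolynomial (Fin n) ℝ) :
    f (Matrix.single a a ((monomial α 1 * t) * (monomial α 1 * t))) ≤
      f (Matrix.single a a (t * t)) := by
  induction α using Finsupp.induction_linear generalizing t with
  | zero => simp
  | add α β hα hβ =>
    have e : monomial (α + β) (1 : ℝ) * t = monomial α 1 * (monomial β 1 * t) := by
      rw [← mul_assoc, monomial_mul, one_mul]
    rw [e]
    exact (hα _).trans (hβ t)
  | single i k =>
    rw [← X_pow_eq_monomial]
    induction k with
    | zero => simp
    | succ k ih =>
      refine le_trans ?_ ih
      have h := hf.nonneg _ (mul_mem (one_sub_X_mem_boxMonoid i) (one_add_X_mem_boxMonoid i)) _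
        (hPvec (Pi.single a (X i ^ k * t)))
      have e : Matrix.single a a (X i ^ k * t * (X i ^ k * t)) =
          ((1 - X i) * (1 + X i) : MvPolynomial (Fin n) ℝ) •
              Matrix.single a a (X i ^ k * t * (X i ^ k * t)) +
            Matrix.single a a (X i ^ (k + 1) * t * (X i ^ (k + 1) * t)) := by
        rw [Matrix.smul_single, smul_eq_mul, ← Matrix.single_add]
        congr 1
        ring
      rw [vecMulVec_piSingle] at h
      rw [e, map_add]
      linarith

theorem abs_single_monomial_le (hf : IsBoxPositive P f)
    (hPvec : ∀ v : Fin p → MvPolynomial (Fin n) ℝ, vecMulVec v v ∈ P)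
    (a b : Fin p) (γ : Fin n →₀ ℕ) :
    |f (Matrix.single a b (monomial γ 1))| ≤ f 1 := by
  have hdiag : ∀ a, f (Matrix.single a a 1) ≤ f 1 := by
    intro a
    rw [map_one_eq_sum_single]
    refine Finset.single_le_sum (f := fun b => f (Matrix.single b b 1)) (fun b _ => ?_)
      (Finset.mem_univ a)
    simpa [vecMulVec_piSingle] using hf.nonneg_vecMulVec hPvec (Pi.single b 1)
  have hγ : f (Matrix.single a a (monomial γ 1 * monomial γ 1)) ≤ f 1 := by
    have := hf.single_monomial_mul_le hPvec a γ 1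
    simp only [mul_one] at this
    exact this.trans (hdiag a)
  have hba : f (Matrix.single b a (monomial γ 1)) = f (Matrix.single a b (monomial γ 1)) := by
    rw [← hf.transpose, Matrix.transpose_single]
  have hadd := hf.nonneg_vecMulVec hPvec (Pi.single a (monomial γ 1) + Pi.single b 1)
  have hsub := hf.nonneg_vecMulVec hPvec (Pi.single a (monomial γ 1) - Pi.single b 1)
  simp only [add_vecMulVec, vecMulVec_add, sub_vecMulVec, vecMulVec_sub, vecMulVec_piSingle,
    map_add, map_sub, mul_one, one_mul] at hadd hsub
  have := hdiag b
  rw [abs_le]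
  constructor <;> linarith

theorem abs_le (hf : IsBoxPositive P f)
    (hPvec : ∀ v : Fin p → MvPolynomial (Fin n) ℝ, vecMulVec v v ∈ P)
    (H : Matrix (Fin p) (Fin p) (MvPolynomial (Fin n) ℝ)) : |f H| ≤ coeffSum H * f 1 :=
  abs_le_coeffSum_mul (hf.abs_single_monomial_le hPvec) H

theorem eq_zero (hf : IsBoxPositive P f)
    (hPvec : ∀ v : Fin p → MvPolynomial (Fin n) ℝ, vecMulVec v v ∈ P) (h1 : f 1 = 0) : f = 0 := by
  ext1 H
  have h := hf.abs_le hPvec H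
  rw [h1, mul_zero] at h
  exact abs_nonpos_iff.1 h

theorem apply_one_nonneg (hf : IsBoxPositive P f)
    (hPvec : ∀ v : Fin p → MvPolynomial (Fin n) ℝ, vecMulVec v v ∈ P) : 0 ≤ f 1 := by
  rw [map_one_eq_sum_single]
  refine Finset.sum_nonneg fun b _ => ?_
  simpa [vecMulVec_piSingle] using hf.nonneg_vecMulVec hPvec (Pi.single b 1)

end IsBoxPositive

end BoxPositive

section States

variable {n p : ℕ} {P : Set (Matrix (Fin p) (Fin p) (MvPolynomial (Fin n) ℝ))}

/-- The normalized box-positive functionals, as functions. -/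
def boxStates (P : Set (Matrix (Fin p) (Fin p) (MvPolynomial (Fin n) ℝ))) :
    Set (Matrix (Fin p) (Fin p) (MvPolynomial (Fin n) ℝ) → ℝ) :=
  {φ | ∃ f : Matrix (Fin p) (Fin p) (MvPolynomial (Fin n) ℝ) →ₗ[ℝ] ℝ,
    IsBoxPositive P f ∧ f 1 = 1 ∧ ⇑f = φ}

theorem convex_boxStates : Convex ℝ (boxStates P) := by
  rintro _ ⟨f, hf, hf1, rfl⟩ _ ⟨g, hg, hg1, rfl⟩ a b ha hb hab
  exact ⟨a • f + b • g, (hf.smul ha).add (hg.smul hb), by simp [hf1, hg1, hab], rfl⟩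

theorem isCompact_boxStates
    (hPvec : ∀ v : Fin p → MvPolynomial (Fin n) ℝ, vecMulVec v v ∈ P) :
    IsCompact (boxStates P) := by
  have hcl : IsClosed (boxStates P) := by
    have e : boxStates P = Set.range (DFunLike.coe :
          (Matrix (Fin p) (Fin p) (MvPolynomial (Fin n) ℝ) →ₗ[ℝ] ℝ) → _) ∩
        ((⋂ H, {φ | φ Hᵀ = φ H}) ∩ (⋂ w ∈ boxMonoid n, ⋂ H ∈ P, {φ | 0 ≤ φ (w • H)}) ∩
          {φ | φ 1 = 1}) := by
      ext φ
      constructor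
      · rintro ⟨f, hf, hf1, rfl⟩
        refine ⟨⟨f, rfl⟩, ⟨Set.mem_iInter.2 hf.transpose, ?_⟩, hf1⟩
        simp only [Set.mem_iInter]
        exact hf.nonneg
      · rintro ⟨⟨f, rfl⟩, ⟨hs, hn⟩, h1⟩
        simp only [Set.mem_iInter] at hs hn
        exact ⟨f, ⟨hs, hn⟩, h1, rfl⟩
    rw [e]
    refine (LinearMap.isClosed_range_coe _ _ _).inter ((IsClosed.inter ?_ ?_).inter ?_)
    · exact isClosed_iInter fun H => isClosed_eq (continuous_apply _) (continuous_apply _)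
    · exact isClosed_iInter fun w => isClosed_iInter fun _ => isClosed_iInter fun H =>
        isClosed_iInter fun _ => isClosed_le continuous_const (continuous_apply _)
    · exact isClosed_eq (continuous_apply _) continuous_const
  refine (isCompact_univ_pi fun H => isCompact_Icc (a := -coeffSum H)
    (b := coeffSum H)).of_isClosed_subset hcl ?_
  rintro _ ⟨f, hf, hf1, rfl⟩ H -
  have h := hf.abs_le hPvec H
  rw [hf1, mul_one] at h
  exact abs_le.1 h

/-- An extreme box state is multiplicative with respect to each variable. -/
theorem exists_apply_X_smul_of_mem_extremePoints
    (hPvec : ∀ v : Fin p → MvPolynomial (Fin n) ℝ, vecMulVec v v ∈ P)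
    {f : Matrix (Fin p) (Fin p) (MvPolynomial (Fin n) ℝ) →ₗ[ℝ] ℝ}
    (hf : ⇑f ∈ (boxStates P).extremePoints ℝ) (i : Fin n) :
    ∃ c : ℝ, |c| ≤ 1 ∧ ∀ H, f ((X i : MvPolynomial (Fin n) ℝ) • H) = c * f H := by
  obtain ⟨⟨f', hpos, hf1, hff'⟩, hext⟩ := mem_extremePoints.1 hf
  obtain rfl : f' = f := DFunLike.coe_injective hff'
  have hg := hpos.comp_smul (one_add_X_mem_boxMonoid i)
  have hh := hpos.comp_smul (one_sub_X_mem_boxMonoid i)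
  set g := f' ∘ₗ DistribSMul.toLinearMap ℝ
    (Matrix (Fin p) (Fin p) (MvPolynomial (Fin n) ℝ)) (1 + X i : MvPolynomial (Fin n) ℝ) with hgdef
  set h := f' ∘ₗ DistribSMul.toLinearMap ℝ
    (Matrix (Fin p) (Fin p) (MvPolynomial (Fin n) ℝ)) (1 - X i : MvPolynomial (Fin n) ℝ) with hhdef
  have hgX : ∀ H, g H = f' H + f' ((X i : MvPolynomial (Fin n) ℝ) • H) := fun H => by
    simp [hgdef, add_smul]
  have hhX : ∀ H, h H = f' H - f' ((X i : MvPolynomial (Fin n) ℝ) • H) := fun H => by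
    simp [hhdef, sub_smul]
  have hg0 := hg.apply_one_nonneg hPvec
  have hh0 := hh.apply_one_nonneg hPvec
  have hsum : g 1 + h 1 = 2 := by
    rw [hgX, hhX, hf1]
    ring
  refine ⟨g 1 - 1, _root_.abs_le.2 ⟨by linarith, by linarith⟩, fun H => ?_⟩
  rcases hg0.eq_or_lt with hg1 | hg1
  · have := hgX H
    rw [hg.eq_zero hPvec hg1.symm] at this ⊢
    simp only [LinearMap.zero_apply] at this ⊢
    linarith
  rcases hh0.eq_or_lt with hh1 | hh1
  · have := hhX H
    rw [hh.eq_zero hPvec hh1.symm] at this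
    simp only [LinearMap.zero_apply] at this
    rw [show g 1 = 2 by linarith]
    linarith
  have key := (hext _ ⟨(g 1)⁻¹ • g, hg.smul (inv_nonneg.2 hg0), by simp [hg1.ne'], rfl⟩
    _ ⟨(h 1)⁻¹ • h, hh.smul (inv_nonneg.2 hh0), by simp [hh1.ne'], rfl⟩
    ⟨g 1 / 2, h 1 / 2, by positivity, by positivity, by linarith, ?_⟩).1
  · have := congrFun key H
    simp only [LinearMap.smul_apply, smul_eq_mul] at this
    rw [inv_mul_eq_iff_eq_mul₀ hg1.ne', hgX H] at this
    linarith
  · funext H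
    simp only [Pi.add_apply, Pi.smul_apply, LinearMap.smul_apply, smul_eq_mul]
    field_simp
    rw [hgX, hhX]
    ring

/-- An extreme box state is evaluation at a point of the box, paired with a symmetric matrix. -/
theorem exists_eval_of_mem_extremePoints
    (hPvec : ∀ v : Fin p → MvPolynomial (Fin n) ℝ, vecMulVec v v ∈ P)
    {φ : Matrix (Fin p) (Fin p) (MvPolynomial (Fin n) ℝ) → ℝ}
    (hφ : φ ∈ (boxStates P).extremePoints ℝ) :
    ∃ (c : Fin n → ℝ) (W : Matrix (Fin p) (Fin p) ℝ), (∀ i, |c i| ≤ 1) ∧ W.IsSymm ∧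
      W.trace = 1 ∧ ∀ H, φ H = ∑ a, ∑ b, eval c (H a b) * W a b := by
  obtain ⟨f, hpos, hf1, rfl⟩ := (mem_extremePoints.1 hφ).1
  choose c hc hcX using exists_apply_X_smul_of_mem_extremePoints hPvec hφ
  have hmul : ∀ (t : MvPolynomial (Fin n) ℝ) H, f (t • H) = eval c t * f H := by
    intro t
    induction t using MvPolynomial.induction_on with
    | C r =>
      intro H
      rw [← algebraMap_eq, algebraMap_smul, map_smul, smul_eq_mul, algebraMap_eq, eval_C]
    | add s t hs ht =>
      intro H
      rw [add_smul, map_add, hs, ht, map_add, add_mul]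
    | mul_X s i hs =>
      intro H
      rw [mul_smul, hs, hcX, map_mul, eval_X, mul_assoc]
  refine ⟨c, Matrix.of fun a b => f (Matrix.single a b 1), hc, ?_, ?_, fun H => ?_⟩
  · ext1 a b
    simpa using hpos.transpose (Matrix.single a b 1)
  · rw [← hf1, map_one_eq_sum_single]
    rfl
  · conv_lhs => rw [Matrix.matrix_eq_sum_single H]
    simp only [map_sum]
    refine Finset.sum_congr rfl fun a _ => Finset.sum_congr rfl fun b _ => ?_
    rw [Matrix.of_apply, ← hmul, Matrix.smul_single, smul_eq_mul, mul_one]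

/-- A bounded functional which is nonnegative on `P` is nonnegative at `F` as soon as all the
point evaluations of the box which are nonnegative on `P` are. -/
theorem nonneg_of_forall_eval_nonneg
    (hPsq : ∀ H ∈ P, ∀ t : MvPolynomial (Fin n) ℝ, (t * t) • H ∈ P)
    (hPvec : ∀ v : Fin p → MvPolynomial (Fin n) ℝ, vecMulVec v v ∈ P)
    {L : Matrix (Fin p) (Fin p) (MvPolynomial (Fin n) ℝ) →ₗ[ℝ] ℝ}
    (hsymm : ∀ H, L Hᵀ = L H) (hpos : ∀ H ∈ P, 0 ≤ L H)
    (hb : ∀ a b γ, |L (Matrix.single a b (monomial γ 1))| ≤ 1)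
    {F : Matrix (Fin p) (Fin p) (MvPolynomial (Fin n) ℝ)}
    (hF : ∀ (c : Fin n → ℝ) (W : Matrix (Fin p) (Fin p) ℝ), (∀ i, |c i| ≤ 1) → W.IsSymm →
      W.trace = 1 → (∀ H ∈ P, 0 ≤ ∑ a, ∑ b, eval c (H a b) * W a b) →
      0 ≤ ∑ a, ∑ b, eval c (F a b) * W a b) : 0 ≤ L F := by
  have hL := isBoxPositive_of_bounded hPsq hsymm hpos hb
  rcases (hL.apply_one_nonneg hPvec).eq_or_lt with h1 | h1
  · rw [hL.eq_zero hPvec h1.symm, LinearMap.zero_apply]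
  have hsub : boxStates P ⊆ {φ | 0 ≤ φ F} := by
    rw [← closure_convexHull_extremePoints (isCompact_boxStates hPvec) convex_boxStates]
    refine closure_minimal (convexHull_min (fun φ hφ => ?_) ?_)
      (isClosed_le continuous_const (continuous_apply F))
    · obtain ⟨c, W, hc, hW, htr, he⟩ := exists_eval_of_mem_extremePoints hPvec hφ
      obtain ⟨f, hf, -, rfl⟩ := (mem_extremePoints.1 hφ).1
      rw [Set.mem_ofPred_eq, he]
      refine hF c W hc hW htr fun H hH => ?_
      rw [← he]
      simpa using hf.nonneg 1 (one_mem _) H hH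
    · intro φ hφ ψ hψ a b ha hb _
      exact add_nonneg (mul_nonneg ha hφ) (mul_nonneg hb hψ)
  have h := hsub ⟨(L 1)⁻¹ • L, hL.smul (inv_nonneg.2 h1.le), by simp [h1.ne'], rfl⟩
  exact nonneg_of_mul_nonneg_right h (inv_pos.2 h1)

end States

open scoped MatrixOrder in
theorem Matrix.PosSemidef.sum_mul_nonneg {ι : Type*} [Fintype ι] [DecidableEq ι]
    {A W : Matrix ι ι ℝ} (hA : A.PosSemidef) (hW : W.PosSemidef) :
    0 ≤ ∑ a, ∑ b, A a b * W a b := by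
  obtain ⟨B, rfl⟩ := CStarAlgebra.nonneg_iff_eq_star_mul_self.mp hW.nonneg
  have h := (hA.mul_mul_conjTranspose_same B).trace_nonneg
  rw [Matrix.trace_mul_comm, ← Matrix.mul_assoc, Matrix.trace_mul_comm] at h
  simp only [Matrix.trace, Matrix.diag, Matrix.mul_apply (M := A)] at h
  refine h.trans_eq (Finset.sum_congr rfl fun a _ => Finset.sum_congr rfl fun b _ => ?_)
  congr 1
  simp [Matrix.mul_apply, Matrix.star_eq_conjTranspose, mul_comm]

section Evaluation

variable {n m p q : ℕ} {ν : Measure (Fin m → ℝ)} {Y : Set (Fin m → ℝ)}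
  {G : Matrix (Fin q) (Fin q) (MvPolynomial (Fin n ⊕ Fin m) ℝ)}
  {c : Fin n → ℝ} {W : Matrix (Fin p) (Fin p) ℝ}

theorem posSemidef_of_forall_isSOSMatrix_nonneg (hW : W.IsSymm)
    (hpos : ∀ S : Matrix (Fin p) (Fin p) (MvPolynomial (Fin n) ℝ), IsSOSMatrix S →
      0 ≤ ∑ a, ∑ b, eval c (S a b) * W a b) : W.PosSemidef := by
  refine .of_dotProduct_mulVec_nonneg ?_ fun u => ?_
  · rw [Matrix.IsHermitian, Matrix.conjTranspose_eq_transpose_of_trivial]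
    exact hW
  · have h := hpos _ (IsSOSMatrix.vecMulVec_self fun a => C (u a))
    refine h.trans_eq ?_
    simp only [dotProduct, mulVec, Finset.mul_sum, vecMulVec_apply, map_mul, eval_C, star_trivial]
    exact Finset.sum_congr rfl fun a _ => Finset.sum_congr rfl fun b _ => by ring

theorem posSemidef_evalMat_of_forall_isSOSMatrix_nonneg (hsupp : hasSupport ν Y)
    (hmom : momentsFinite ν) (hcar : Carleman ν) (hG : G.IsSymm) {i : Fin p} (hi : 0 < W i i)
    (hpos : ∀ Sg : Matrix (Fin p × Fin q) (Fin p × Fin q) (MvPolynomial (Fin n ⊕ Fin m) ℝ),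
      IsSOSMatrix Sg → 0 ≤ ∑ a, ∑ b, eval c (integY ν (lram Sg G a b)) * W a b) :
    ∀ y ∈ Y, (evalMat (Sum.elim c y) G).PosSemidef := by
  classical
  intro y hy
  refine .of_dotProduct_mulVec_nonneg ?_ fun v => ?_
  · rw [Matrix.IsHermitian, Matrix.conjTranspose_eq_transpose_of_trivial, evalMat,
      ← Matrix.transpose_map, hG]
  have key := eval_nonneg_of_forall_integral_sq_mul_nonneg hsupp hcar hmom
    (bind₁ (Sum.elim (fun i => C (c i)) X) (∑ a, ∑ b, C (v a) * C (v b) * G b a)) ?_ y hy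
  · rw [eval_sumElim_eq_eval_bind] at key
    refine key.trans_eq ?_
    simp only [dotProduct, mulVec, Finset.mul_sum, map_sum, map_mul, eval_C, star_trivial,
      evalMat, Matrix.map_apply]
    refine Finset.sum_congr rfl fun a _ => Finset.sum_congr rfl fun b _ => ?_
    rw [hG.apply]
    ring
  · intro t
    have h := hpos _ (IsSOSMatrix.vecMulVec_self fun r : Fin p × Fin q =>
      if r.1 = i then rename Sum.inr t * C (v r.2) else 0)
    have hzero : ∀ a b, ¬ (a = i ∧ b = i) → eval c (integY ν (lram (vecMulVec
        (fun r : Fin p × Fin q => if r.1 = i then rename Sum.inr t * C (v r.2) else 0)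
        (fun r : Fin p × Fin q => if r.1 = i then rename Sum.inr t * C (v r.2) else 0)) G a b))
          * W a b = 0 := by
      intro a b hab
      have : ∀ a' b', ((if b = i then rename Sum.inr t * C (v b') else 0) *
          (if a = i then rename Sum.inr t * C (v a') else 0) :
            MvPolynomial (Fin n ⊕ Fin m) ℝ) = 0 := by
        intro a' b'
        split_ifs <;> simp_all
      simp only [lram, vecMulVec_apply, Matrix.of_apply, this, zero_mul, Finset.sum_const_zero]
      simp [integY]
    rw [Finset.sum_eq_single i (fun a _ ha => Finset.sum_eq_zero fun b _ =>
        hzero a b fun h => ha h.1) (by simp),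
      Finset.sum_eq_single i (fun b _ hb => hzero i b fun h => hb h.2) (by simp)] at h
    refine (nonneg_of_mul_nonneg_left h hi).trans_eq ?_
    rw [hmom.eval_integY]
    refine integral_congr_ae (Filter.Eventually.of_forall fun y => ?_)
    simp only [eval_sumElim_eq_eval_bind, lram, vecMulVec_apply, if_true, Matrix.of_apply, map_sum,
      map_mul, eval_rename, Sum.elim_comp_inr, eval_C, Finset.mul_sum]
    exact Finset.sum_congr rfl fun a _ => Finset.sum_congr rfl fun b _ => by ring

end Evaluation

/-- perturbative Positivstellensatz with universal quantifiers
(Theorem E). -/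
theorem perturbative_positivstellensatz {n m p q : ℕ}
    (Y : Set (Fin m → ℝ)) (hY : IsClosed Y)
    (ν : Measure (Fin m → ℝ)) (hsupp : hasSupport ν Y) (hmom : momentsFinite ν)
    (hcar : Carleman ν)
    (G : Matrix (Fin q) (Fin q) (MvPolynomial (Fin n ⊕ Fin m) ℝ)) (hGs : G.IsSymm)
    (F : Matrix (Fin p) (Fin p) (MvPolynomial (Fin n) ℝ)) (hFs : F.IsSymm)
    (lam : ℝ) (hlam : 0 < lam)
    (O₁ : Set (Fin n → ℝ)) (O₂ : Set (Fin m → ℝ))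
    (hO₁o : IsOpen O₁) (hO₁b : Bornology.IsBounded O₁)
    (hO₂o : IsOpen O₂) (hO₂b : Bornology.IsBounded O₂)
    (hO₁X : O₁ ⊆ {x | ∀ y ∈ Y, (evalMat (Sum.elim x y) G).PosSemidef})
    (hO₂Y : O₂ ⊆ Y)
    (hGl : ∀ x ∈ O₁, ∀ y ∈ O₂,
      ((evalMat (Sum.elim x y) G) - lam • (1 : Matrix (Fin q) (Fin q) ℝ)).PosSemidef)
    (hpsd : ∀ x : Fin n → ℝ, (∀ i, |x i| ≤ 1) →
      (∀ y ∈ Y, (evalMat (Sum.elim x y) G).PosSemidef) → (evalMat x F).PosSemidef) :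
    ∀ ε > (0 : ℝ), ∃ ℓ₁ ℓ₂ : ℕ, ∀ d ≥ ℓ₁, ∀ k ≥ ℓ₂,
      ∃ (S0 : Matrix (Fin p) (Fin p) (MvPolynomial (Fin n) ℝ))
        (Sg : Matrix (Fin p × Fin q) (Fin p × Fin q) (MvPolynomial (Fin n ⊕ Fin m) ℝ)),
        IsSOSMatrix S0 ∧ matDeg S0 ≤ 2 * d ∧
        IsSOSMatrix Sg ∧ matDegX Sg ≤ 2 * d - 2 * ((matDegX G + 1) / 2) ∧
        matDegY Sg ≤ 2 * k ∧
        F + (MvPolynomial.C ε *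
            ((1 : MvPolynomial (Fin n) ℝ) + ∑ i, X i ^ (2 * d))) •
            (1 : Matrix (Fin p) (Fin p) (MvPolynomial (Fin n) ℝ)) =
          S0 + (lram Sg G).map (integY ν) := by
  intro ε hε
  by_contra! hcon
  obtain ⟨L, hLsymm, hLpos, hLb, hLF⟩ :=
    exists_functional_of_forall_not_hasCert (G := G) hmom hGs hFs (ε := ε) fun N => by
      obtain ⟨d, hd, k, hk, h⟩ := hcon N N
      refine ⟨d, hd, k, hk, ?_⟩
      rintro ⟨S0, Sg, h1, h2, h3, h4, h5, h6⟩
      exact h S0 Sg h1 h2 h3 h4 h5 h6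
  have hinteg0 : integY (n := n) ν 0 = 0 := by simp [integY]
  have h : 0 ≤ L F := by
    refine nonneg_of_forall_eval_nonneg
      (P := {H | ∃ S0 Sg, IsSOSMatrix S0 ∧ IsSOSMatrix Sg ∧
        H = S0 + (lram Sg G).map (integY ν)}) ?_ ?_ hLsymm ?_ hLb ?_
    · rintro _ ⟨S0, Sg, hS0, hSg, rfl⟩ t
      refine ⟨(t * t) • S0, (rename Sum.inl t * rename Sum.inl t) • Sg, hS0.mul_self_smul t,
        hSg.mul_self_smul _, ?_⟩
      rw [lram_smul, ← map_mul, smul_add]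
      ext1 i j
      simp only [Matrix.add_apply, Matrix.smul_apply, Matrix.map_apply, smul_eq_mul,
        hmom.integY_rename_mul]
    · intro v
      refine ⟨_, 0, .vecMulVec_self v, .zero, ?_⟩
      rw [lram_zero, Matrix.map_zero _ hinteg0, add_zero]
    · rintro _ ⟨S0, Sg, hS0, hSg, rfl⟩
      exact hLpos S0 Sg hS0 hSg
    · intro c W hc hW htr hP
      have hWpos : W.PosSemidef := by
        refine posSemidef_of_forall_isSOSMatrix_nonneg hW fun S hS => hP S ⟨S, 0, hS, .zero, ?_⟩
        rw [lram_zero, Matrix.map_zero _ hinteg0, add_zero]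
      obtain ⟨i, -, hi⟩ : ∃ i ∈ Finset.univ, 0 < W i i := by
        refine Finset.exists_lt_of_sum_lt (f := fun _ => (0 : ℝ)) ?_
        rw [Finset.sum_const_zero]
        exact one_pos.trans_eq htr.symm
      refine Matrix.PosSemidef.sum_mul_nonneg (hpsd c hc ?_) hWpos
      refine posSemidef_evalMat_of_forall_isSOSMatrix_nonneg hsupp hmom hcar hGs hi fun Sg hSg => ?_
      simpa using hP _ ⟨0, Sg, .zero, hSg, rfl⟩
  linarith
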